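/- arXiv:2104.12238 — 2 statements merged into one kernel-verified Lean document; each statement's English description precedes it below -/
import Mathlib

section
/- Let N ≥ 2, let 0 < δ < 1, and let A ≥ 1. Let f be a smooth real-valued function on a compact interval I = [a, b] such that the N-th derivative f^{(N)} is single-signed on I, and suppose that for all real λ ≠ 0, |∫_I e^{iλ f(x)} dx| ≤ A |λ|^{-δ}. Then there is a constant C, depending only on d, N and δ (and not on f, I, A or λ), such that for every polynomial P of degree d ≥ 2 whose derivative P′ is monic, and for all real λ ≠ 0, |∫_I e^{iλ P(f(x))} dx| ≤ C · A^{1/(1−δ)} · |λ|^{-δ/d}. -/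
open MeasureTheory

/-- The weight obtained by testing `|s| ^ (-δ)` against a Gaussian is integrable for `δ < 1`. -/
lemma integrable_gaussian_mul_abs_rpow {δ : ℝ} (hδ1 : δ < 1) :
    Integrable (fun s : ℝ => Real.exp (-1 * s ^ 2) * |s| ^ (-δ)) := by
  have h := (integrable_rpow_mul_exp_neg_mul_sq (b := 1) one_pos (s := -δ) (by linarith))
  have hpos : IntegrableOn (fun s : ℝ => Real.exp (-1 * s ^ 2) * |s| ^ (-δ)) (Set.Ioi 0) := by
    refine h.integrableOn.congr_fun (fun s hs => ?_) measurableSet_Ioi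
    simp only [abs_of_pos (Set.mem_Ioi.1 hs)]
    ring
  have hneg : IntegrableOn (fun s : ℝ => Real.exp (-1 * s ^ 2) * |s| ^ (-δ)) (Set.Iio 0) := by
    refine (integrableOn_congr_fun (fun s _ => ?_) measurableSet_Iio).1
      (IntegrableOn.comp_neg_Iio (c := 0) (by rwa [neg_zero]))
    simp only [abs_neg, neg_sq]
  rw [← integrableOn_univ, ← Set.Iio_union_Ici (a := (0 : ℝ))]
  exact hneg.union (by rwa [integrableOn_Ici_iff_integrableOn_Ioi])

/-- Decay of order `δ < 1` of the characteristic function of `f` under `μ` bounds the `μ`-measure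
of the sublevel sets of `|f - t|`. -/
lemma exists_measureReal_abs_sub_le {δ : ℝ} (hδ1 : δ < 1) :
    ∃ C : ℝ, 0 < C ∧ ∀ (μ : Measure ℝ) [IsFiniteMeasure μ] (f : ℝ → ℝ), AEMeasurable f μ →
      ∀ A : ℝ, 0 ≤ A →
      (∀ lam : ℝ, lam ≠ 0 →
        ‖∫ x, Complex.exp (Complex.I * (lam : ℂ) * (f x : ℂ)) ∂μ‖ ≤ A * |lam| ^ (-δ)) →
      ∀ t ε : ℝ, 0 < ε → μ.real {x | |f x - t| ≤ ε} ≤ C * A * ε ^ δ := by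
  set J : ℝ := ∫ s : ℝ, Real.exp (-1 * s ^ 2) * |s| ^ (-δ) with hJ
  have hJ0 : 0 ≤ J := integral_nonneg fun s => by positivity
  refine ⟨Real.exp (1 / 4) * (Real.sqrt Real.pi)⁻¹ * (J + 1), by positivity, ?_⟩
  intro μ _ f hf A hA hdecay t ε hε
  have hint : Integrable (Function.uncurry fun (x s : ℝ) =>
      Complex.exp (Complex.I * (((f x - t) / ε : ℝ) : ℂ) * s) * Complex.exp (-1 * (s : ℂ) ^ 2))
      (μ.prod volume) := by
    have hg : Integrable (fun z : ℝ × ℝ => (1 : ℝ) * Real.exp (-1 * z.2 ^ 2)) (μ.prod volume) :=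
      (integrable_const (1 : ℝ)).mul_prod (integrable_exp_neg_mul_sq one_pos)
    refine hg.mono ?_ (Filter.Eventually.of_forall ?_)
    · have hf1 : AEMeasurable (fun z : ℝ × ℝ => f z.1) (μ.prod volume) := hf.comp_fst
      refine AEMeasurable.aestronglyMeasurable ?_
      unfold Function.uncurry
      fun_prop
    · rintro ⟨x, s⟩
      simp only [Function.uncurry, norm_mul, Complex.norm_exp, Real.norm_eq_abs, Real.abs_exp]
      apply le_of_eq
      congr 1
      · simp [Complex.mul_re, Complex.mul_im]
      · simp [← Complex.ofReal_pow]
  have hswap := integral_integral_swap hint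
  have hleft : ∀ x : ℝ, ∫ s : ℝ, Complex.exp (Complex.I * (((f x - t) / ε : ℝ) : ℂ) * s) *
      Complex.exp (-1 * (s : ℂ) ^ 2) =
      ((Real.sqrt Real.pi * Real.exp (-((f x - t) / ε) ^ 2 / 4) : ℝ) : ℂ) := by
    intro x
    rw [fourierIntegral_gaussian (b := 1) (by simp), Real.sqrt_eq_rpow]
    push_cast [Complex.ofReal_cpow Real.pi_pos.le]
    simp
  simp only [hleft] at hswap
  rw [integral_complex_ofReal, integral_const_mul] at hswap
  have hright : ‖∫ s : ℝ, ∫ x, Complex.exp (Complex.I * (((f x - t) / ε : ℝ) : ℂ) * s) *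
      Complex.exp (-1 * (s : ℂ) ^ 2) ∂μ‖ ≤ A * ε ^ δ * J := by
    rw [hJ, ← integral_const_mul]
    refine norm_integral_le_of_norm_le
      ((integrable_gaussian_mul_abs_rpow hδ1).const_mul _) ?_
    have hne : ∀ᵐ s : ℝ, s ≠ 0 := by simp [ae_iff]
    filter_upwards [hne] with s hs
    have heq : ∀ x, Complex.exp (Complex.I * (((f x - t) / ε : ℝ) : ℂ) * s) =
        Complex.exp (Complex.I * ((s / ε : ℝ) : ℂ) * (f x : ℂ)) *
          Complex.exp (((-(t / ε * s) : ℝ) : ℂ) * Complex.I) := by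
      intro x
      rw [← Complex.exp_add]
      congr 1
      push_cast
      ring
    rw [integral_mul_const]
    simp_rw [heq]
    rw [integral_mul_const, norm_mul, norm_mul, Complex.norm_exp_ofReal_mul_I, mul_one]
    have h1 := hdecay (s / ε) (div_ne_zero hs hε.ne')
    have h2 : ‖Complex.exp (-1 * (s : ℂ) ^ 2)‖ = Real.exp (-1 * s ^ 2) := by
      rw [Complex.norm_exp]
      simp [← Complex.ofReal_pow]
    have h3 : |s / ε| ^ (-δ) = ε ^ δ * |s| ^ (-δ) := by
      rw [abs_div, abs_of_pos hε, Real.div_rpow (abs_nonneg _) hε.le, Real.rpow_neg hε.le δ,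
        div_inv_eq_mul, mul_comm]
    rw [h2]
    rw [h3] at h1
    calc _ ≤ A * (ε ^ δ * |s| ^ (-δ)) * Real.exp (-1 * s ^ 2) := by gcongr
      _ = _ := by ring
  rw [← hswap, Complex.norm_real, Real.norm_eq_abs] at hright
  have hgint : Integrable (fun x => Real.exp (-((f x - t) / ε) ^ 2 / 4)) μ := by
    refine (integrable_const (1 : ℝ)).mono (AEMeasurable.aestronglyMeasurable (by fun_prop))
      (Filter.Eventually.of_forall fun x => ?_)
    simp only [Real.norm_eq_abs, Real.abs_exp, abs_one, Real.exp_le_one_iff]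
    nlinarith [sq_nonneg ((f x - t) / ε)]
  have hmarkov := mul_meas_ge_le_integral_of_nonneg
    (Filter.Eventually.of_forall fun x => (Real.exp_pos (-((f x - t) / ε) ^ 2 / 4)).le) hgint
    (Real.exp (-(1 / 4)))
  have hsub : μ.real {x | |f x - t| ≤ ε} ≤
      μ.real {x | Real.exp (-(1 / 4)) ≤ Real.exp (-((f x - t) / ε) ^ 2 / 4)} := by
    refine measureReal_mono fun x hx => ?_
    have h1 : |(f x - t) / ε| ≤ 1 := by
      rw [abs_div, abs_of_pos hε, div_le_one hε]
      exact hx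
    have h2 := (sq_le_one_iff_abs_le_one _).2 h1
    simp only [Set.mem_ofPred_eq, Real.exp_le_exp]
    linarith
  have hsq : 0 < Real.sqrt Real.pi := Real.sqrt_pos.2 Real.pi_pos
  have h4 := (le_abs_self _).trans hright
  have h5 : ∫ x, Real.exp (-((f x - t) / ε) ^ 2 / 4) ∂μ ≤
      (Real.sqrt Real.pi)⁻¹ * (A * ε ^ δ * J) := by
    rwa [inv_mul_eq_div, le_div_iff₀' hsq]
  have hee : Real.exp (1 / 4) * Real.exp (-(1 / 4)) = 1 := by
    rw [← Real.exp_add]; simp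
  calc μ.real {x | |f x - t| ≤ ε}
      = Real.exp (1 / 4) * (Real.exp (-(1 / 4)) * μ.real {x | |f x - t| ≤ ε}) := by
        rw [← mul_assoc, hee, one_mul]
    _ ≤ Real.exp (1 / 4) * ((Real.sqrt Real.pi)⁻¹ * (A * ε ^ δ * (J + 1))) := by
        refine mul_le_mul_of_nonneg_left ?_ (Real.exp_pos _).le
        refine (mul_le_mul_of_nonneg_left hsub (Real.exp_pos _).le).trans
          (hmarkov.trans (h5.trans ?_))
        gcongr
        linarith
    _ = _ := by ring

/-- A real monic polynomial can be small only near the real parts of its complex roots. -/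
lemma Polynomial.Monic.exists_finset_abs_sub_le {Q : Polynomial ℝ} (hQ : Q.Monic)
    (hn : Q.natDegree ≠ 0) :
    ∃ S : Finset ℝ, S.card ≤ Q.natDegree ∧
      ∀ x ε : ℝ, 0 < ε → |Q.eval x| ≤ ε ^ Q.natDegree → ∃ s ∈ S, |x - s| ≤ 2 * ε := by
  set R : Polynomial ℂ := Q.map (algebraMap ℝ ℂ) with hR
  have hsplit : R.Splits := IsAlgClosed.splits R
  have hcard : R.roots.card = Q.natDegree := by
    rw [← hsplit.natDegree_eq_card_roots, hR, Polynomial.natDegree_map]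
  refine ⟨(R.roots.map Complex.re).toFinset, ?_, ?_⟩
  · refine (Multiset.toFinset_card_le _).trans ?_
    rw [Multiset.card_map, hcard]
  · intro x ε hε hx
    by_contra! hfar
    have hprod : ‖R.eval (x : ℂ)‖ = (R.roots.map fun z => ‖(x : ℂ) - z‖).prod := by
      rw [hsplit.eval_eq_prod_roots_of_monic (hQ.map _),
        show ∀ z : ℂ, ‖z‖ = (normHom : ℂ →*₀ ℝ) z from fun _ => rfl,
        map_multiset_prod, Multiset.map_map]
      rfl
    have heval : ‖R.eval (x : ℂ)‖ = |Q.eval x| := by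
      rw [hR, Polynomial.eval_map_algebraMap]
      have : (x : ℂ) = algebraMap ℝ ℂ x := rfl
      rw [this, Polynomial.aeval_algebraMap_apply]
      simp
    have hle : (2 * ε) ^ Q.natDegree ≤ ‖R.eval (x : ℂ)‖ := by
      have h := Multiset.prod_map_le_prod_map₀ (s := R.roots) (fun _ => 2 * ε)
        (fun z => ‖(x : ℂ) - z‖) (fun _ _ => by positivity) (fun z hz => by
          refine (hfar z.re ?_).le.trans ?_
          · simp only [Multiset.mem_toFinset, Multiset.mem_map]
            exact ⟨z, hz, rfl⟩
          · simpa using Complex.abs_re_le_norm ((x : ℂ) - z))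
      rwa [Multiset.map_const', Multiset.prod_replicate, hcard, ← hprod] at h
    rw [heval] at hle
    have hlt : ε ^ Q.natDegree < (2 * ε) ^ Q.natDegree :=
      pow_lt_pow_left₀ (by linarith) hε.le hn
    linarith

/-- `g` has a constant (weak) sign on `[u, v]`. -/
def SingleSignedOn (g : ℝ → ℝ) (u v : ℝ) : Prop :=
  (∀ x ∈ Set.Icc u v, 0 ≤ g x) ∨ (∀ x ∈ Set.Icc u v, g x ≤ 0)

lemma SingleSignedOn.mono {g : ℝ → ℝ} {u v u' v' : ℝ} (h : SingleSignedOn g u v)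
    (hu : u ≤ u') (hv : v' ≤ v) : SingleSignedOn g u' v' :=
  h.imp (fun h x hx => h x (Set.Icc_subset_Icc hu hv hx))
    (fun h x hx => h x (Set.Icc_subset_Icc hu hv hx))

lemma SingleSignedOn.mul {g h : ℝ → ℝ} {u v : ℝ} (hg : SingleSignedOn g u v)
    (hh : SingleSignedOn h u v) : SingleSignedOn (fun x => g x * h x) u v := by
  rcases hg with hg | hg <;> rcases hh with hh | hh
  · exact Or.inl fun x hx => mul_nonneg (hg x hx) (hh x hx)
  · exact Or.inr fun x hx => mul_nonpos_of_nonneg_of_nonpos (hg x hx) (hh x hx)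
  · exact Or.inr fun x hx => mul_nonpos_of_nonpos_of_nonneg (hg x hx) (hh x hx)
  · exact Or.inl fun x hx => mul_nonneg_of_nonpos_of_nonpos (hg x hx) (hh x hx)

lemma SingleSignedOn.monotoneOn_or_antitoneOn {g g' : ℝ → ℝ} {u v : ℝ}
    (h : SingleSignedOn g' u v)
    (hg : ∀ x ∈ Set.Icc u v, HasDerivWithinAt g (g' x) (Set.Icc u v) x) :
    MonotoneOn g (Set.Icc u v) ∨ AntitoneOn g (Set.Icc u v) := by
  have hc : ContinuousOn g (Set.Icc u v) := fun x hx => (hg x hx).continuousWithinAt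
  refine h.imp (fun h => ?_) (fun h => ?_)
  · exact monotoneOn_of_hasDerivWithinAt_nonneg (convex_Icc u v) hc
      (fun x hx => (hg x (interior_subset hx)).mono interior_subset)
      (fun x hx => h x (interior_subset hx))
  · exact antitoneOn_of_hasDerivWithinAt_nonpos (convex_Icc u v) hc
      (fun x hx => (hg x (interior_subset hx)).mono interior_subset)
      (fun x hx => h x (interior_subset hx))

lemma MonotoneOn.exists_singleSignedOn {g : ℝ → ℝ} {u v : ℝ} (huv : u ≤ v)
    (hc : ContinuousOn g (Set.Icc u v)) (hm : MonotoneOn g (Set.Icc u v)) :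
    ∃ c ∈ Set.Icc u v, SingleSignedOn g u c ∧ SingleSignedOn g c v := by
  have hu : u ∈ Set.Icc u v := Set.left_mem_Icc.2 huv
  have hv : v ∈ Set.Icc u v := Set.right_mem_Icc.2 huv
  by_cases h0 : 0 ≤ g u
  · have hpos : ∀ x ∈ Set.Icc u v, 0 ≤ g x := fun x hx => h0.trans (hm hu hx hx.1)
    exact ⟨v, hv, Or.inl hpos, SingleSignedOn.mono (Or.inl hpos) huv le_rfl⟩
  by_cases h1 : g v ≤ 0
  · have hneg : ∀ x ∈ Set.Icc u v, g x ≤ 0 := fun x hx => (hm hx hv hx.2).trans h1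
    exact ⟨v, hv, Or.inr hneg, SingleSignedOn.mono (Or.inr hneg) huv le_rfl⟩
  obtain ⟨c, hc, hc0⟩ := intermediate_value_Icc huv hc ⟨(not_le.1 h0).le, (not_le.1 h1).le⟩
  refine ⟨c, hc, Or.inr fun x hx => ?_, Or.inl fun x hx => ?_⟩
  · exact hc0 ▸ hm ⟨hx.1, hx.2.trans hc.2⟩ hc hx.2
  · exact hc0 ▸ hm hc ⟨hc.1.trans hx.1, hx.2⟩ hx.1

lemma SingleSignedOn.of_neg {g : ℝ → ℝ} {u v : ℝ} (h : SingleSignedOn (fun x => -g x) u v) :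
    SingleSignedOn g u v :=
  h.symm.imp (fun h x hx => neg_nonpos.1 (h x hx)) (fun h x hx => neg_nonneg.1 (h x hx))

lemma exists_singleSignedOn {g : ℝ → ℝ} {u v : ℝ} (huv : u ≤ v)
    (hc : ContinuousOn g (Set.Icc u v))
    (hm : MonotoneOn g (Set.Icc u v) ∨ AntitoneOn g (Set.Icc u v)) :
    ∃ c ∈ Set.Icc u v, SingleSignedOn g u c ∧ SingleSignedOn g c v := by
  rcases hm with hm | hm
  · exact hm.exists_singleSignedOn huv hc
  · obtain ⟨c, hc, h1, h2⟩ := MonotoneOn.exists_singleSignedOn huv hc.neg hm.neg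
    exact ⟨c, hc, h1.of_neg, h2.of_neg⟩

/-- To bound an integral it suffices to bound it over subintervals where a given monotone or
antitone function has constant sign. -/
lemma norm_integral_le_of_singleSignedOn {E : ℝ → ℂ} {g : ℝ → ℝ} {u v K : ℝ} (huv : u ≤ v)
    (hE : ContinuousOn E (Set.Icc u v)) (hc : ContinuousOn g (Set.Icc u v))
    (hm : MonotoneOn g (Set.Icc u v) ∨ AntitoneOn g (Set.Icc u v))
    (h : ∀ u' v', u ≤ u' → u' ≤ v' → v' ≤ v → SingleSignedOn g u' v' →
      ‖∫ x in u'..v', E x‖ ≤ K) :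
    ‖∫ x in u..v, E x‖ ≤ 2 * K := by
  obtain ⟨c, hcm, h1, h2⟩ := exists_singleSignedOn huv hc hm
  have hi1 : IntervalIntegrable E volume u c :=
    (hE.mono (Set.Icc_subset_Icc le_rfl hcm.2)).intervalIntegrable_of_Icc hcm.1
  have hi2 : IntervalIntegrable E volume c v :=
    (hE.mono (Set.Icc_subset_Icc hcm.1 le_rfl)).intervalIntegrable_of_Icc hcm.2
  rw [← intervalIntegral.integral_add_adjacent_intervals hi1 hi2]
  have := h u c le_rfl hcm.1 hcm.2 h1
  have := h c v hcm.1 hcm.2 le_rfl h2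
  linarith [norm_add_le (∫ x in u..c, E x) (∫ x in c..v, E x)]

/-- Refinement at two opposite levels: on the subintervals `g` is either uniformly small or
uniformly large. -/
lemma norm_integral_le_of_levels {E : ℝ → ℂ} {g : ℝ → ℝ} {u v K α : ℝ} (huv : u ≤ v)
    (hE : ContinuousOn E (Set.Icc u v)) (hc : ContinuousOn g (Set.Icc u v))
    (hm : MonotoneOn g (Set.Icc u v) ∨ AntitoneOn g (Set.Icc u v))
    (h : ∀ u' v', u ≤ u' → u' ≤ v' → v' ≤ v →
      ((∀ x ∈ Set.Icc u' v', |g x| ≤ α) ∨ (∀ x ∈ Set.Icc u' v', α ≤ |g x|)) →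
      ‖∫ x in u'..v', E x‖ ≤ K) :
    ‖∫ x in u..v, E x‖ ≤ 4 * K := by
  have hshift : ∀ c : ℝ, MonotoneOn (fun x => g x + c) (Set.Icc u v) ∨
      AntitoneOn (fun x => g x + c) (Set.Icc u v) := fun c =>
    hm.imp (fun hm => hm.add_const c) (fun hm => hm.add_const c)
  have key : ‖∫ x in u..v, E x‖ ≤ 2 * (2 * K) := by
    refine norm_integral_le_of_singleSignedOn (g := fun x => g x + -α) huv hE
      (hc.add continuousOn_const)
      (hshift (-α)) fun u₁ v₁ hu₁ h₁ hv₁ hs₁ => ?_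
    have hsub := Set.Icc_subset_Icc hu₁ hv₁
    refine norm_integral_le_of_singleSignedOn (g := fun x => g x + α) h₁ (hE.mono hsub)
      ((hc.add continuousOn_const).mono hsub)
      ((hshift α).imp (fun hm => hm.mono hsub) (fun hm => hm.mono hsub))
      fun u₂ v₂ hu₂ h₂ hv₂ hs₂ => ?_
    refine h u₂ v₂ (hu₁.trans hu₂) h₂ (hv₂.trans hv₁) ?_
    rcases hs₁.mono hu₂ hv₂ with h1 | h1
    · exact Or.inr fun x hx => by linarith [h1 x hx, le_abs_self (g x)]
    · rcases hs₂ with h2 | h2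
      · exact Or.inl fun x hx => abs_le.2 ⟨by linarith [h2 x hx], by linarith [h1 x hx]⟩
      · exact Or.inr fun x hx => by linarith [h2 x hx, neg_le_abs (g x)]
  linarith

/-- Descent along a chain `F 0, F 1, …` of functions with `(F k)' = F (k + 1) * w`, where `w` has
constant sign. -/
lemma norm_integral_le_of_chain {E : ℝ → ℂ} {F : ℕ → ℝ → ℝ} {w : ℝ → ℝ} {a b K : ℝ}
    (hE : ContinuousOn E (Set.Icc a b))
    (hF : ∀ k, ∀ x ∈ Set.Icc a b, HasDerivWithinAt (F k) (F (k + 1) x * w x) (Set.Icc a b) x)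
    (hw : SingleSignedOn w a b)
    (h : ∀ u v, a ≤ u → u ≤ v → v ≤ b → SingleSignedOn (F 2) u v → ‖∫ x in u..v, E x‖ ≤ K)
    (n : ℕ) : ∀ u v, a ≤ u → u ≤ v → v ≤ b → SingleSignedOn (F (n + 2)) u v →
      ‖∫ x in u..v, E x‖ ≤ 2 ^ n * K := by
  induction n with
  | zero => simpa using h
  | succ n ih =>
    intro u v hu huv hv hs
    have hsub := Set.Icc_subset_Icc hu hv
    have hder : ∀ x ∈ Set.Icc u v,
        HasDerivWithinAt (F (n + 2)) (F (n + 1 + 2) x * w x) (Set.Icc u v) x :=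
      fun x hx => (hF (n + 2) x (hsub hx)).mono hsub
    have hmain := norm_integral_le_of_singleSignedOn huv (hE.mono hsub)
      (fun x hx => (hder x hx).continuousWithinAt)
      ((hs.mul (hw.mono hu hv)).monotoneOn_or_antitoneOn hder)
      (fun u' v' hu' h' hv' hs' => ih u' v' (hu.trans hu') h' (hv'.trans hv) hs')
    rw [pow_succ]
    linarith

lemma integral_abs_deriv_le {p p' : ℝ → ℝ} {u v M : ℝ} (huv : u ≤ v)
    (hp : ∀ x ∈ Set.Icc u v, HasDerivWithinAt p (p' x) (Set.Icc u v) x)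
    (hp' : ContinuousOn p' (Set.Icc u v)) (hs : SingleSignedOn p' u v)
    (hM : ∀ x ∈ Set.Icc u v, |p x| ≤ M) :
    ∫ x in u..v, |p' x| ≤ 2 * M := by
  have hftc : ∫ x in u..v, p' x = p v - p u :=
    intervalIntegral.integral_eq_sub_of_hasDerivAt_of_le huv
      (fun x hx => (hp x hx).continuousWithinAt)
      (fun x hx => (hp x (Set.Ioo_subset_Icc_self hx)).hasDerivAt (Icc_mem_nhds hx.1 hx.2))
      (hp'.intervalIntegrable_of_Icc huv)
  have hu := abs_le.1 (hM u (Set.left_mem_Icc.2 huv))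
  have hv := abs_le.1 (hM v (Set.right_mem_Icc.2 huv))
  rcases hs with hs | hs
  · have : ∫ x in u..v, |p' x| = ∫ x in u..v, p' x :=
      intervalIntegral.integral_congr fun x hx => by
        rw [Set.uIcc_of_le huv] at hx
        exact abs_of_nonneg (hs x hx)
    linarith
  · have : ∫ x in u..v, |p' x| = ∫ x in u..v, -p' x :=
      intervalIntegral.integral_congr fun x hx => by
        rw [Set.uIcc_of_le huv] at hx
        exact abs_of_nonpos (hs x hx)
    rw [intervalIntegral.integral_neg] at this
    linarith

/-- The reciprocal of a function that is bounded below in absolute value and has a derivative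
of constant sign. -/
lemma integral_abs_deriv_inv_le {g g' : ℝ → ℝ} {u v α : ℝ} (huv : u ≤ v) (hα : 0 < α)
    (hg : ∀ x ∈ Set.Icc u v, HasDerivWithinAt g (g' x) (Set.Icc u v) x)
    (hg' : ContinuousOn g' (Set.Icc u v)) (hs : SingleSignedOn g' u v)
    (hlow : ∀ x ∈ Set.Icc u v, α ≤ |g x|) :
    (∀ x ∈ Set.Icc u v, HasDerivWithinAt (fun y => (g y)⁻¹) (-g' x / g x ^ 2) (Set.Icc u v) x) ∧
    ContinuousOn (fun x => -g' x / g x ^ 2) (Set.Icc u v) ∧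
    (∀ x ∈ Set.Icc u v, |(g x)⁻¹| ≤ α⁻¹) ∧
    ∫ x in u..v, |-g' x / g x ^ 2| ≤ 2 * α⁻¹ := by
  have hne : ∀ x ∈ Set.Icc u v, g x ≠ 0 := fun x hx =>
    abs_pos.1 (hα.trans_le (hlow x hx))
  have hd : ∀ x ∈ Set.Icc u v,
      HasDerivWithinAt (fun y => (g y)⁻¹) (-g' x / g x ^ 2) (Set.Icc u v) x :=
    fun x hx => (hg x hx).fun_inv (hne x hx)
  have hc : ContinuousOn (fun x => -g' x / g x ^ 2) (Set.Icc u v) :=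
    hg'.neg.div (ContinuousOn.pow (fun x hx => (hg x hx).continuousWithinAt) 2)
      (fun x hx => pow_ne_zero 2 (hne x hx))
  have hb : ∀ x ∈ Set.Icc u v, |(g x)⁻¹| ≤ α⁻¹ := fun x hx => by
    rw [abs_inv]
    exact inv_anti₀ hα (hlow x hx)
  refine ⟨hd, hc, hb, integral_abs_deriv_le huv hd hc ?_ hb⟩
  refine hs.symm.imp (fun h x hx => ?_) (fun h x hx => ?_)
  · exact div_nonneg (neg_nonneg.2 (h x hx)) (sq_nonneg _)
  · exact div_nonpos_of_nonpos_of_nonneg (neg_nonpos.2 (h x hx)) (sq_nonneg _)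

/-- First derivative test for a phase whose derivative is a product of two functions, each bounded
below in absolute value and with a derivative of constant sign. -/
lemma norm_integral_exp_le_of_deriv_mul {φ g g' h h' : ℝ → ℝ} {u v α β lam : ℝ} (huv : u ≤ v)
    (hα : 0 < α) (hβ : 0 < β) (hlam : lam ≠ 0)
    (hφ : ∀ x ∈ Set.Icc u v, HasDerivWithinAt φ (g x * h x) (Set.Icc u v) x)
    (hg : ∀ x ∈ Set.Icc u v, HasDerivWithinAt g (g' x) (Set.Icc u v) x)
    (hg' : ContinuousOn g' (Set.Icc u v)) (hgs : SingleSignedOn g' u v)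
    (hglow : ∀ x ∈ Set.Icc u v, α ≤ |g x|)
    (hh : ∀ x ∈ Set.Icc u v, HasDerivWithinAt h (h' x) (Set.Icc u v) x)
    (hh' : ContinuousOn h' (Set.Icc u v)) (hhs : SingleSignedOn h' u v)
    (hhlow : ∀ x ∈ Set.Icc u v, β ≤ |h x|) :
    ‖∫ x in u..v, Complex.exp (Complex.I * (lam : ℂ) * (φ x : ℂ))‖ ≤ 6 / (|lam| * α * β) := by
  obtain ⟨hpd, hpc, hpb, hpi⟩ := integral_abs_deriv_inv_le huv hα hg hg' hgs hglow
  obtain ⟨hqd, hqc, hqb, hqi⟩ := integral_abs_deriv_inv_le huv hβ hh hh' hhs hhlow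
  set p : ℝ → ℝ := fun x => (g x)⁻¹ with hp
  set q : ℝ → ℝ := fun x => (h x)⁻¹ with hq
  set p' : ℝ → ℝ := fun x => -g' x / g x ^ 2 with hp'
  set q' : ℝ → ℝ := fun x => -h' x / h x ^ 2 with hq'
  set e : ℝ → ℂ := fun x => Complex.exp (Complex.I * (lam : ℂ) * (φ x : ℂ)) with he
  replace hpd : ∀ x ∈ Set.Icc u v, HasDerivWithinAt p (p' x) (Set.Icc u v) x := hpd
  replace hqd : ∀ x ∈ Set.Icc u v, HasDerivWithinAt q (q' x) (Set.Icc u v) x := hqd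
  have hpcont : ContinuousOn p (Set.Icc u v) := fun x hx => (hpd x hx).continuousWithinAt
  have hqcont : ContinuousOn q (Set.Icc u v) := fun x hx => (hqd x hx).continuousWithinAt
  have hed : ∀ x ∈ Set.Icc u v, HasDerivWithinAt e
      (e x * (Complex.I * lam * ((g x * h x : ℝ) : ℂ))) (Set.Icc u v) x := fun x hx =>
    ((hφ x hx).ofReal_comp.const_mul (Complex.I * (lam : ℂ))).cexp
  have hecont : ContinuousOn e (Set.Icc u v) := fun x hx => (hed x hx).continuousWithinAt
  have hnorm : ∀ x, ‖e x‖ = 1 := fun x => by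
    have : Complex.I * (lam : ℂ) * (φ x : ℂ) = ((lam * φ x : ℝ) : ℂ) * Complex.I := by
      push_cast
      ring
    simp only [he, this, Complex.norm_exp_ofReal_mul_I]
  have hpq : ∀ x ∈ Set.Icc u v, g x * h x * (p x * q x) = 1 := fun x hx => by
    have h1 : g x ≠ 0 := abs_pos.1 (hα.trans_le (hglow x hx))
    have h2 : h x ≠ 0 := abs_pos.1 (hβ.trans_le (hhlow x hx))
    simp only [hp, hq]
    field_simp
  have hder : ∀ x ∈ Set.Icc u v, HasDerivWithinAt (fun x => e x * ((p x * q x : ℝ) : ℂ))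
      (Complex.I * lam * e x + e x * ((p' x * q x + p x * q' x : ℝ) : ℂ)) (Set.Icc u v) x := by
    intro x hx
    have hpq' := congrArg (fun r : ℝ => (r : ℂ)) (hpq x hx)
    push_cast at hpq'
    refine ((hed x hx).mul ((hpd x hx).mul (hqd x hx)).ofReal_comp).congr_deriv ?_
    simp only [Pi.mul_apply]
    push_cast
    linear_combination (e x * Complex.I * lam) * hpq'
  have hcont2 : ContinuousOn (fun x => e x * ((p' x * q x + p x * q' x : ℝ) : ℂ))
      (Set.Icc u v) :=
    hecont.mul (Complex.continuous_ofReal.comp_continuousOn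
      ((hpc.mul hqcont).add (hpcont.mul hqc)))
  have hint1 : IntervalIntegrable (fun x => Complex.I * lam * e x) volume u v :=
    (continuousOn_const.mul hecont).intervalIntegrable_of_Icc huv
  have hint2 := hcont2.intervalIntegrable_of_Icc (μ := volume) huv
  have hftc := intervalIntegral.integral_eq_sub_of_hasDerivAt_of_le huv
    (fun x hx => (hder x hx).continuousWithinAt)
    (fun x hx => (hder x (Set.Ioo_subset_Icc_self hx)).hasDerivAt (Icc_mem_nhds hx.1 hx.2))
    (hint1.add hint2)
  rw [intervalIntegral.integral_add hint1 hint2, intervalIntegral.integral_const_mul] at hftc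
  have hbdry : ∀ x ∈ Set.Icc u v, ‖e x * ((p x * q x : ℝ) : ℂ)‖ ≤ α⁻¹ * β⁻¹ := fun x hx => by
    rw [norm_mul, hnorm, one_mul, Complex.norm_real, Real.norm_eq_abs, abs_mul]
    exact mul_le_mul (hpb x hx) (hqb x hx) (abs_nonneg _) (inv_nonneg.2 hα.le)
  have hpi' : IntervalIntegrable (fun x => |p' x| * β⁻¹) volume u v :=
    (hpc.abs.mul continuousOn_const).intervalIntegrable_of_Icc huv
  have hqi' : IntervalIntegrable (fun x => α⁻¹ * |q' x|) volume u v :=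
    (continuousOn_const.mul hqc.abs).intervalIntegrable_of_Icc huv
  have hrem : ‖∫ x in u..v, e x * ((p' x * q x + p x * q' x : ℝ) : ℂ)‖ ≤ 4 * (α⁻¹ * β⁻¹) := by
    refine (intervalIntegral.norm_integral_le_of_norm_le huv
      (g := fun x => |p' x| * β⁻¹ + α⁻¹ * |q' x|)
      (Filter.Eventually.of_forall fun x hx => ?_) (hpi'.add hqi')).trans ?_
    · have hx' := Set.Ioc_subset_Icc_self hx
      rw [norm_mul, hnorm, one_mul, Complex.norm_real, Real.norm_eq_abs]
      refine (abs_add_le _ _).trans ?_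
      rw [abs_mul, abs_mul]
      gcongr
      · exact hqb x hx'
      · exact hpb x hx'
    · rw [intervalIntegral.integral_add hpi' hqi', intervalIntegral.integral_mul_const,
        intervalIntegral.integral_const_mul]
      have h1 := mul_le_mul_of_nonneg_right hpi (inv_nonneg.2 hβ.le)
      have h2 := mul_le_mul_of_nonneg_left hqi (inv_nonneg.2 hα.le)
      linarith
  have hfinal : ‖Complex.I * (lam : ℂ) * ∫ x in u..v, e x‖ ≤ 6 * (α⁻¹ * β⁻¹) := by
    rw [eq_sub_of_add_eq hftc]
    refine (norm_sub_le _ _).trans ?_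
    have h1 := hbdry u (Set.left_mem_Icc.2 huv)
    have h2 := hbdry v (Set.right_mem_Icc.2 huv)
    have h3 := norm_sub_le (e v * ((p v * q v : ℝ) : ℂ)) (e u * ((p u * q u : ℝ) : ℂ))
    linarith
  rw [norm_mul, norm_mul, Complex.norm_I, one_mul, Complex.norm_real, Real.norm_eq_abs] at hfinal
  have hl : 0 < |lam| := abs_pos.2 hlam
  rw [le_div_iff₀ (by positivity)]
  calc _ = (|lam| * ‖∫ x in u..v, e x‖) * (α * β) := by ring
    _ ≤ 6 * (α⁻¹ * β⁻¹) * (α * β) := by gcongr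
    _ = 6 := by field_simp

/-- An interval on which `f` has a small derivative is short, if the sublevel sets of `f - t` obey a
power law with exponent `δ < 1`. -/
lemma length_le_of_abs_deriv_le {f f' : ℝ → ℝ} {a b u v B δ η : ℝ} (hδ1 : δ < 1)
    (hB : 0 < B) (hη : 0 < η) (hau : a ≤ u) (huv : u ≤ v) (hvb : v ≤ b)
    (hf : ∀ x ∈ Set.Icc u v, HasDerivWithinAt f (f' x) (Set.Icc u v) x)
    (hsmall : ∀ x ∈ Set.Icc u v, |f' x| ≤ η)
    (hlevel : ∀ t ε : ℝ, 0 < ε →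
      (volume.restrict (Set.Icc a b)).real {x | |f x - t| ≤ ε} ≤ B * ε ^ δ) :
    v - u ≤ B ^ (1 / (1 - δ)) * η ^ (δ / (1 - δ)) := by
  rcases huv.eq_or_lt with rfl | hlt
  · rw [sub_self]
    positivity
  have hl : 0 < v - u := sub_pos.2 hlt
  have hδ : 0 < 1 - δ := by linarith
  have hsub : Set.Icc u v ⊆ {x | |f x - f u| ≤ η * (v - u)} := fun x hx => by
    have h1 := (convex_Icc u v).norm_image_sub_le_of_norm_hasDerivWithin_le hf hsmall
      (Set.left_mem_Icc.2 huv) hx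
    simp only [Real.norm_eq_abs] at h1
    refine h1.trans ?_
    rw [abs_of_nonneg (sub_nonneg.2 hx.1)]
    exact mul_le_mul_of_nonneg_left (by linarith [hx.2]) hη.le
  have hmeas : v - u ≤ B * (η * (v - u)) ^ δ := by
    refine le_trans ?_ (hlevel (f u) (η * (v - u)) (by positivity))
    refine le_trans ?_ (measureReal_mono hsub)
    rw [measureReal_restrict_apply measurableSet_Icc,
      Set.inter_eq_left.2 (Set.Icc_subset_Icc hau hvb), Real.volume_real_Icc_of_le huv]
  rw [Real.mul_rpow hη.le hl.le] at hmeas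
  have hpow : (v - u) ^ (1 - δ) ≤ B * η ^ δ := by
    rw [Real.rpow_sub hl, Real.rpow_one, div_le_iff₀ (by positivity)]
    linarith
  calc v - u = ((v - u) ^ (1 - δ)) ^ (1 / (1 - δ)) := by
        rw [← Real.rpow_mul hl.le, mul_one_div_cancel hδ.ne', Real.rpow_one]
    _ ≤ (B * η ^ δ) ^ (1 / (1 - δ)) :=
        Real.rpow_le_rpow (by positivity) hpow (by positivity)
    _ = _ := by
        rw [Real.mul_rpow hB.le (by positivity), ← Real.rpow_mul hη.le, mul_one_div]

/-- An interval on which a monic polynomial in `f` is small is short, if the sublevel sets of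
`f - t` obey a power law. -/
lemma length_le_of_abs_eval_le {f : ℝ → ℝ} {Q : Polynomial ℝ} {a b u v B δ ε : ℝ}
    (hQ : Q.Monic) (hn : Q.natDegree ≠ 0) (hB : 0 ≤ B) (hε : 0 < ε)
    (hau : a ≤ u) (huv : u ≤ v) (hvb : v ≤ b)
    (hsmall : ∀ x ∈ Set.Icc u v, |Q.eval (f x)| ≤ ε ^ Q.natDegree)
    (hlevel : ∀ t ε : ℝ, 0 < ε →
      (volume.restrict (Set.Icc a b)).real {x | |f x - t| ≤ ε} ≤ B * ε ^ δ) :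
    v - u ≤ Q.natDegree * (B * (2 * ε) ^ δ) := by
  obtain ⟨S, hcard, hS⟩ := hQ.exists_finset_abs_sub_le hn
  have hsub : Set.Icc u v ⊆ ⋃ s ∈ S, {x | |f x - s| ≤ 2 * ε} := fun x hx => by
    obtain ⟨s, hs, hxs⟩ := hS (f x) ε hε (hsmall x hx)
    exact Set.mem_biUnion hs hxs
  calc v - u = (volume.restrict (Set.Icc a b)).real (Set.Icc u v) := by
        rw [measureReal_restrict_apply measurableSet_Icc,
          Set.inter_eq_left.2 (Set.Icc_subset_Icc hau hvb), Real.volume_real_Icc_of_le huv]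
    _ ≤ (volume.restrict (Set.Icc a b)).real (⋃ s ∈ S, {x | |f x - s| ≤ 2 * ε}) :=
        measureReal_mono hsub (measure_ne_top _ _)
    _ ≤ ∑ s ∈ S, (volume.restrict (Set.Icc a b)).real {x | |f x - s| ≤ 2 * ε} :=
        measureReal_biUnion_finset_le _ _
    _ ≤ ∑ s ∈ S, B * (2 * ε) ^ δ :=
        Finset.sum_le_sum fun s _ => hlevel s (2 * ε) (by positivity)
    _ ≤ _ := by
        rw [Finset.sum_const, nsmul_eq_mul]
        gcongr

/-- Decomposition estimate for the phase `P ∘ f`: either `f'` or `P' ∘ f` is small, or the first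
derivative test applies. -/
lemma norm_integral_exp_eval_le {F : ℕ → ℝ → ℝ} {P : Polynomial ℝ} {a b B δ ε η lam K : ℝ}
    {N d : ℕ} (hN : 2 ≤ N) (hd : 2 ≤ d) (hδ1 : δ < 1) (hab : a ≤ b)
    (hF : ∀ k, ∀ x ∈ Set.Icc a b, HasDerivWithinAt (F k) (F (k + 1) x) (Set.Icc a b) x)
    (hFN : SingleSignedOn (F N) a b) (hPd : P.natDegree = d) (hP : P.derivative.Monic)
    (hB : 0 < B) (hε : 0 < ε) (hη : 0 < η) (hlam : lam ≠ 0)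
    (hlevel : ∀ t ε : ℝ, 0 < ε →
      (volume.restrict (Set.Icc a b)).real {x | |F 0 x - t| ≤ ε} ≤ B * ε ^ δ)
    (hK₁ : B ^ (1 / (1 - δ)) * η ^ (δ / (1 - δ)) ≤ K)
    (hK₂ : d * (B * (2 * ε) ^ δ) ≤ K)
    (hK₃ : 6 / (|lam| * ε ^ (d - 1) * η) ≤ K) :
    ‖∫ x in a..b, Complex.exp (Complex.I * (lam : ℂ) * ((P.eval (F 0 x) : ℝ) : ℂ))‖ ≤
      2 ^ (N + d + 2) * K := by
  set E : ℝ → ℂ := fun x => Complex.exp (Complex.I * (lam : ℂ) * ((P.eval (F 0 x) : ℝ) : ℂ))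
    with hEdef
  set G : ℕ → ℝ → ℝ := fun k x => (Polynomial.derivative^[k] P).eval (F 0 x) with hGdef
  have hFc : ∀ k, ContinuousOn (F k) (Set.Icc a b) := fun k x hx => (hF k x hx).continuousWithinAt
  have hG : ∀ k, ∀ x ∈ Set.Icc a b,
      HasDerivWithinAt (G k) (G (k + 1) x * F 1 x) (Set.Icc a b) x := fun k x hx => by
    have h := ((Polynomial.derivative^[k] P).hasDerivAt (F 0 x)).comp_hasDerivWithinAt x (hF 0 x hx)
    simp only [hGdef, Function.iterate_succ_apply']
    exact h
  have hGc : ∀ k, ContinuousOn (G k) (Set.Icc a b) := fun k x hx => (hG k x hx).continuousWithinAt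
  have hEc : ContinuousOn E (Set.Icc a b) :=
    Complex.continuous_exp.comp_continuousOn
      (continuousOn_const.mul (Complex.continuous_ofReal.comp_continuousOn (hGc 0)))
  have hEnorm : ∀ x, ‖E x‖ = 1 := fun x => by
    have : Complex.I * (lam : ℂ) * ((P.eval (F 0 x) : ℝ) : ℂ) =
        ((lam * P.eval (F 0 x) : ℝ) : ℂ) * Complex.I := by
      push_cast
      ring
    simp only [hEdef, this, Complex.norm_exp_ofReal_mul_I]
  have htriv : ∀ u v, u ≤ v → ‖∫ x in u..v, E x‖ ≤ v - u := fun u v huv => by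
    have h := intervalIntegral.norm_integral_le_of_norm_le_const (a := u) (b := v) (f := E) (C := 1)
      (fun x _ => (hEnorm x).le)
    rwa [one_mul, abs_of_nonneg (sub_nonneg.2 huv)] at h
  have hQd : P.derivative.natDegree = d - 1 := by
    rw [Polynomial.natDegree_derivative, hPd]
  -- On pieces where `f''`, `f'` and `P'' ∘ f` have constant sign.
  have hpiece : ∀ u v, a ≤ u → u ≤ v → v ≤ b → SingleSignedOn (F 2) u v →
      SingleSignedOn (F 1) u v → SingleSignedOn (G 2) u v →
      ‖∫ x in u..v, E x‖ ≤ 4 * (4 * K) := by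
    intro u v hu huv hv hF2 hF1 hG2
    have hsub := Set.Icc_subset_Icc hu hv
    refine norm_integral_le_of_levels (g := F 1) (α := η) huv (hEc.mono hsub) ((hFc 1).mono hsub)
      (hF2.monotoneOn_or_antitoneOn fun x hx => (hF 1 x (hsub hx)).mono hsub)
      fun u₁ v₁ hu₁ h₁ hv₁ hlev₁ => ?_
    have hsub₁ := Set.Icc_subset_Icc (hu.trans hu₁) (hv₁.trans hv)
    have hGF := ((hG2.mul hF1).mono hu₁ hv₁)
    refine norm_integral_le_of_levels (g := G 1) (α := ε ^ (d - 1)) h₁ (hEc.mono hsub₁)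
      ((hGc 1).mono hsub₁)
      (hGF.monotoneOn_or_antitoneOn fun x hx => (hG 1 x (hsub₁ hx)).mono hsub₁)
      fun u₂ v₂ hu₂ h₂ hv₂ hlev₂ => ?_
    have hau₂ : a ≤ u₂ := (hu.trans hu₁).trans hu₂
    have hvb₂ : v₂ ≤ b := hv₂.trans (hv₁.trans hv)
    have hsub₂ := Set.Icc_subset_Icc hau₂ hvb₂
    have hsub₁₂ := Set.Icc_subset_Icc hu₂ hv₂
    rcases hlev₁ with hlev₁ | hlev₁
    · exact (htriv u₂ v₂ h₂).trans <| (length_le_of_abs_deriv_le (f := F 0) (f' := F 1) hδ1 hB hη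
        hau₂ h₂ hvb₂ (fun x hx => (hF 0 x (hsub₂ hx)).mono hsub₂)
        (fun x hx => hlev₁ x (hsub₁₂ hx)) hlevel).trans hK₁
    rcases hlev₂ with hlev₂ | hlev₂
    · refine (htriv u₂ v₂ h₂).trans <| (length_le_of_abs_eval_le (f := F 0) hP (by omega) hB.le hε
        hau₂ h₂ hvb₂ (fun x hx => by rw [hQd]; exact hlev₂ x hx) hlevel).trans (le_trans ?_ hK₂)
      rw [hQd]
      gcongr
      omega
    · refine (norm_integral_exp_le_of_deriv_mul (φ := G 0) (g := G 1)
        (g' := fun x => G 2 x * F 1 x) (h := F 1) (h' := F 2) h₂ (pow_pos hε _) hη hlam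
        (fun x hx => (hG 0 x (hsub₂ hx)).mono hsub₂) (fun x hx => (hG 1 x (hsub₂ hx)).mono hsub₂)
        (((hGc 2).mul (hFc 1)).mono hsub₂) (hGF.mono hu₂ hv₂) hlev₂
        (fun x hx => (hF 1 x (hsub₂ hx)).mono hsub₂) ((hFc 2).mono hsub₂)
        ((hF2.mono hu₁ hv₁).mono hu₂ hv₂) (fun x hx => hlev₁ x (hsub₁₂ hx))).trans hK₃
  have hpieceF : ∀ u v, a ≤ u → u ≤ v → v ≤ b → SingleSignedOn (F 2) u v →
      ‖∫ x in u..v, E x‖ ≤ 2 * (2 ^ (d - 1) * (4 * (4 * K))) := by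
    intro u v hu huv hv hF2
    have hsub := Set.Icc_subset_Icc hu hv
    refine norm_integral_le_of_singleSignedOn (g := F 1) huv (hEc.mono hsub) ((hFc 1).mono hsub)
      (hF2.monotoneOn_or_antitoneOn fun x hx => (hF 1 x (hsub hx)).mono hsub)
      fun u₁ v₁ hu₁ h₁ hv₁ hF1 => ?_
    have hsub₁ := Set.Icc_subset_Icc (hu.trans hu₁) (hv₁.trans hv)
    refine norm_integral_le_of_chain (F := G) (w := F 1) (hEc.mono hsub₁)
      (fun k x hx => (hG k x (hsub₁ hx)).mono hsub₁) hF1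
      (fun u₂ v₂ hu₂ h₂ hv₂ hG2 => hpiece u₂ v₂ ((hu.trans hu₁).trans hu₂) h₂
        (hv₂.trans (hv₁.trans hv)) ((hF2.mono hu₁ hv₁).mono hu₂ hv₂) (hF1.mono hu₂ hv₂) hG2)
      (d - 1) u₁ v₁ le_rfl h₁ le_rfl (Or.inl fun x _ => ?_)
    simp only [hGdef]
    rw [Polynomial.iterate_derivative_eq_zero (by omega), Polynomial.eval_zero]
  obtain ⟨n, rfl⟩ : ∃ n, N = n + 2 := ⟨N - 2, by omega⟩
  obtain ⟨m, rfl⟩ : ∃ m, d = m + 1 := ⟨d - 1, by omega⟩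
  refine (norm_integral_le_of_chain (F := F) (w := fun _ => 1) hEc
    (fun k x hx => by simpa using hF k x hx) (Or.inl fun _ _ => zero_le_one) hpieceF n a b le_rfl
    hab le_rfl hFN).trans (le_of_eq ?_)
  simp only [Nat.add_sub_cancel]
  ring

/-- Let `N ≥ 2`, `0 < δ < 1`, `A ≥ 1`. If `f` is smooth on `I = [a, b]`
with `f^{(N)}` single-signed on `I`, and `|∫_I e^{iλ f}| ≤ A |λ|^{-δ}` for all `λ ≠ 0`,
then there is a constant `C = C(d, N, δ)` such that for every polynomial `P` of degree
`d ≥ 2` with `P'` monic, and all `λ ≠ 0`,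
`|∫_I e^{iλ P(f)}| ≤ C · A^{1/(1-δ)} · |λ|^{-δ/d}`. -/
theorem stmt_1 (N d : ℕ) (hN : 2 ≤ N) (hd : 2 ≤ d) (δ : ℝ) (hδ0 : 0 < δ) (hδ1 : δ < 1) :
    ∃ C : ℝ, 0 < C ∧
      ∀ (a b : ℝ), a ≤ b →
      ∀ f : ℝ → ℝ, ContDiffOn ℝ (⊤ : ℕ∞) f (Set.Icc a b) →
      ((∀ x ∈ Set.Icc a b, 0 ≤ iteratedDerivWithin N f (Set.Icc a b) x) ∨
        (∀ x ∈ Set.Icc a b, iteratedDerivWithin N f (Set.Icc a b) x ≤ 0)) →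
      ∀ A : ℝ, 1 ≤ A →
      (∀ lam : ℝ, lam ≠ 0 →
        ‖∫ x in Set.Icc a b, Complex.exp (Complex.I * (lam : ℂ) * (f x : ℂ))‖ ≤
          A * |lam| ^ (-δ)) →
      ∀ P : Polynomial ℝ, P.natDegree = d → P.derivative.Monic →
      ∀ lam : ℝ, lam ≠ 0 →
        ‖∫ x in Set.Icc a b, Complex.exp (Complex.I * (lam : ℂ) * ((P.eval (f x) : ℝ) : ℂ))‖ ≤
          C * A ^ (1 / (1 - δ)) * |lam| ^ (-(δ / (d : ℝ))) := by
  obtain ⟨C₀, hC₀, hlevel⟩ := exists_measureReal_abs_sub_le hδ1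
  have hδ : 0 < 1 - δ := by linarith
  refine ⟨2 ^ (N + d + 2) * (C₀ ^ (1 / (1 - δ)) + d * (C₀ * 2 ^ δ) + 6), by positivity, ?_⟩
  intro a b hab f hf hfN A hA hdecay P hPd hP lam hlam
  have hA0 : 0 < A := by linarith
  have hl : 0 < |lam| := abs_pos.2 hlam
  rcases hab.eq_or_lt with rfl | hlt
  · simp only [Set.Icc_self, Measure.restrict_singleton, Real.volume_singleton, zero_smul,
      integral_zero_measure, norm_zero]
    positivity
  have hud := uniqueDiffOn_Icc hlt
  have hF : ∀ k, ∀ x ∈ Set.Icc a b, HasDerivWithinAt (iteratedDerivWithin k f (Set.Icc a b))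
      (iteratedDerivWithin (k + 1) f (Set.Icc a b) x) (Set.Icc a b) x := fun k x hx => by
    rw [iteratedDerivWithin_succ]
    refine (hf.differentiableOn_iteratedDerivWithin ?_ hud x hx).hasDerivWithinAt
    exact_mod_cast WithTop.coe_lt_top k
  set m : ℝ := |lam| ^ (1 / (d : ℝ)) with hm
  have hm0 : 0 < m := by positivity
  have hd0 : (d : ℝ) ≠ 0 := by positivity
  have hmd : |lam| = m ^ d := by
    rw [hm, ← Real.rpow_natCast, ← Real.rpow_mul hl.le, one_div_mul_cancel hd0, Real.rpow_one]
  have hmδ : |lam| ^ (-(δ / (d : ℝ))) = m ^ (-δ) := by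
    rw [hm, ← Real.rpow_mul hl.le]
    congr 1
    ring
  have hAle : A ≤ A ^ (1 / (1 - δ)) := by
    conv_lhs => rw [← Real.rpow_one A]
    exact Real.rpow_le_rpow_of_exponent_le hA (by rw [le_div_iff₀ hδ]; linarith)
  have hA1 : 1 ≤ A ^ (1 / (1 - δ)) := hA.trans hAle
  set Y : ℝ := A ^ (1 / (1 - δ)) * m ^ (-δ) with hY
  have hY0 : 0 < Y := by positivity
  have hmain := norm_integral_exp_eval_le
    (F := fun k => iteratedDerivWithin k f (Set.Icc a b)) (P := P) (a := a) (b := b)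
    (B := C₀ * A) (δ := δ) (ε := m⁻¹) (η := m ^ (-(1 - δ))) (lam := lam)
    (K := (C₀ ^ (1 / (1 - δ)) + d * (C₀ * 2 ^ δ) + 6) * Y)
    hN hd hδ1 hab hF hfN hPd hP (by positivity) (by positivity) (by positivity) hlam ?_ ?_ ?_ ?_
  · rw [integral_Icc_eq_integral_Ioc, ← intervalIntegral.integral_of_le hab, hmδ]
    simp only [iteratedDerivWithin_zero] at hmain
    refine hmain.trans (le_of_eq ?_)
    rw [hY]
    ring
  · intro t ε hε
    simp only [iteratedDerivWithin_zero]
    exact hlevel _ f (hf.continuousOn.aemeasurable measurableSet_Icc) A hA0.le hdecay t ε hε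
  · have h1 : (C₀ * A) ^ (1 / (1 - δ)) * (m ^ (-(1 - δ))) ^ (δ / (1 - δ)) =
        C₀ ^ (1 / (1 - δ)) * Y := by
      rw [hY, Real.mul_rpow hC₀.le hA0.le, ← Real.rpow_mul hm0.le, mul_assoc]
      congr 4
      field_simp
    rw [h1]
    gcongr
    have : 0 ≤ (d : ℝ) * (C₀ * 2 ^ δ) := by positivity
    linarith
  · have h2 : (2 * m⁻¹) ^ δ = 2 ^ δ * m ^ (-δ) := by
      rw [Real.mul_rpow (by norm_num) (by positivity), Real.inv_rpow hm0.le, Real.rpow_neg hm0.le]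
    rw [h2]
    calc (d : ℝ) * (C₀ * A * (2 ^ δ * m ^ (-δ))) = d * (C₀ * 2 ^ δ) * (A * m ^ (-δ)) := by ring
      _ ≤ d * (C₀ * 2 ^ δ) * Y := by rw [hY]; gcongr
      _ ≤ _ := by
        gcongr
        have : 0 ≤ C₀ ^ (1 / (1 - δ)) := by positivity
        linarith
  · have h3 : |lam| * m⁻¹ ^ (d - 1) * m ^ (-(1 - δ)) = m ^ δ := by
      obtain ⟨n, rfl⟩ : ∃ n, d = n + 1 := ⟨d - 1, by omega⟩
      have hcancel : m ^ (n + 1) * m⁻¹ ^ n = m := by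
        rw [pow_succ, inv_pow]
        field_simp
      rw [hmd, Nat.add_sub_cancel, hcancel, ← Real.rpow_one_add' hm0.le (by linarith)]
      congr 1
      ring
    rw [h3, div_eq_mul_inv, ← Real.rpow_neg hm0.le]
    calc 6 * m ^ (-δ) ≤ 6 * Y := by
          rw [hY]
          gcongr
          exact le_mul_of_one_le_left (by positivity) hA1
      _ ≤ _ := by
        gcongr
        have : 0 ≤ C₀ ^ (1 / (1 - δ)) + d * (C₀ * 2 ^ δ) := by positivity
        linarith
end

section
/- Let N ≥ 1 and let f be a smooth real-valued function on a compact interval I = [a, b] satisfying |f^{(N)}(x)| ≥ 1 for all x ∈ I, where in the case N = 1 we additionally assume that f′ is monotone on I. Then there is a constant C, depending only on d and N (and not on f or I), such that for every polynomial P of degree d ≥ 2 whose derivative P′ is either monic or a semi-non-degenerating (SND) polynomial, and for all real λ with |λ| ≥ 1, |∫_I e^{iλ P(f(x))} dx| ≤ C · |λ|^{-1/(N d)}. -/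
open MeasureTheory

/-- A real polynomial `Q = a_m x^m + … + a_0` (with `m = Q.natDegree`) is
semi-non-degenerating (SND) if `max_j |a_{m-j}| = 1` and this maximum is attained by
some `j` with `j ≤ m/2`. -/
def IsSND (Q : Polynomial ℝ) : Prop :=
  (∀ i, |Q.coeff i| ≤ 1) ∧ ∃ j, 2 * j ≤ Q.natDegree ∧ |Q.coeff (Q.natDegree - j)| = 1

/-- On `s`, each `g j` with `j < N` has derivative `g (j + 1)`. -/
def DerivChain (g : ℕ → ℝ → ℝ) (N : ℕ) (s : Set ℝ) : Prop :=
  ∀ j < N, ∀ x ∈ s, HasDerivWithinAt (g j) (g (j + 1) x) s x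

lemma DerivChain.mono {g : ℕ → ℝ → ℝ} {N : ℕ} {s t : Set ℝ} (h : DerivChain g N s)
    (hst : t ⊆ s) : DerivChain g N t :=
  fun j hj x hx => (h j hj x (hst hx)).mono hst

lemma DerivChain.shift {g : ℕ → ℝ → ℝ} {N : ℕ} {s : Set ℝ} (h : DerivChain g (N + 1) s) :
    DerivChain (fun j => g (j + 1)) N s :=
  fun j hj => h (j + 1) (by omega)

lemma exists_deriv_mul_sub {g g' : ℝ → ℝ} {u v x y : ℝ}
    (hg : ∀ x ∈ Set.Icc u v, HasDerivWithinAt g (g' x) (Set.Icc u v) x)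
    (hux : u ≤ x) (hxy : x < y) (hyv : y ≤ v) :
    ∃ z ∈ Set.Ioo x y, g y - g x = g' z * (y - x) := by
  have hsub : Set.Icc x y ⊆ Set.Icc u v := Set.Icc_subset_Icc hux hyv
  obtain ⟨z, hz, h⟩ := exists_hasDerivAt_eq_slope g g' hxy
    (fun w hw => ((hg w (hsub hw)).continuousWithinAt).mono hsub)
    (fun w hw => (hg w (hsub (Set.Ioo_subset_Icc_self hw))).hasDerivAt
      (Icc_mem_nhds (hux.trans_lt hw.1) (hw.2.trans_le hyv)))
  refine ⟨z, hz, ?_⟩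
  rw [h, div_mul_cancel₀ _ (sub_pos.2 hxy).ne']

lemma exists_third_le_abs {g g' : ℝ → ℝ} {u v c : ℝ} (huv : u ≤ v)
    (hg : ∀ x ∈ Set.Icc u v, HasDerivWithinAt g (g' x) (Set.Icc u v) x)
    (hc : ∀ x ∈ Set.Icc u v, c ≤ |g' x|) :
    ∃ p, u ≤ p ∧ p + (v - u) / 3 ≤ v ∧
      ∀ x ∈ Set.Icc p (p + (v - u) / 3), c * (v - u) / 6 ≤ |g x| := by
  by_contra! H
  obtain ⟨x, hx, hx'⟩ := H u le_rfl (by linarith)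
  obtain ⟨y, hy, hy'⟩ := H (v - (v - u) / 3) (by linarith) (by linarith)
  rcases huv.eq_or_lt with rfl | huv
  · simp at hx'
    exact (abs_nonneg _).not_gt hx'
  have hxy : x < y := by linarith [hx.2, hy.1]
  obtain ⟨z, hz, h⟩ := exists_deriv_mul_sub hg hx.1 hxy (by linarith [hy.2])
  have hz' := hc z ⟨by linarith [hx.1, hz.1], by linarith [hy.2, hz.2]⟩
  have h1 : |g y - g x| = |g' z| * (y - x) := by
    rw [h, abs_mul, abs_of_pos (sub_pos.2 hxy)]
  have h2 : |g y - g x| ≤ |g y| + |g x| := abs_sub _ _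
  have h3 : (v - u) / 3 ≤ y - x := by linarith [hx.2, hy.1]
  have hcpos : 0 < c * (v - u) / 6 := (abs_nonneg _).trans_lt hx'
  nlinarith [mul_le_mul hz' h3 (by linarith) (abs_nonneg (g' z))]

lemma exists_subinterval_le_abs (N : ℕ) : ∃ c : ℝ, 0 < c ∧ ∀ (g : ℕ → ℝ → ℝ) (u v : ℝ), u ≤ v →
    DerivChain g N (Set.Icc u v) → (∀ x ∈ Set.Icc u v, 1 ≤ |g N x|) →
    ∃ p, u ≤ p ∧ p + (v - u) / 3 ^ N ≤ v ∧
      ∀ x ∈ Set.Icc p (p + (v - u) / 3 ^ N), c * (v - u) ^ N ≤ |g 0 x| := by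
  induction N with
  | zero =>
    refine ⟨1, one_pos, fun g u v huv _ h => ⟨u, le_rfl, by simp, fun x hx => ?_⟩⟩
    simpa using h x (by simpa using hx)
  | succ N ih =>
    obtain ⟨c, hc, ih⟩ := ih
    refine ⟨c / (6 * 3 ^ N), by positivity, fun g u v huv hg h => ?_⟩
    obtain ⟨p, hup, hpv, hp⟩ := ih (fun j => g (j + 1)) u v huv hg.shift h
    have hL : 0 ≤ (v - u) / 3 ^ N := div_nonneg (sub_nonneg.2 huv) (by positivity)
    obtain ⟨r, hr, hr', hr''⟩ := exists_third_le_abs (g := g 0) (g' := g 1)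
      (u := p) (v := p + (v - u) / 3 ^ N) (by linarith)
      ((hg.mono (Set.Icc_subset_Icc hup hpv)) 0 (by omega)) hp
    have e : (p + (v - u) / 3 ^ N - p) / 3 = (v - u) / 3 ^ (N + 1) := by
      rw [pow_succ]; field_simp; ring
    rw [e] at hr' hr''
    refine ⟨r, hup.trans hr, hr'.trans hpv, fun x hx => ?_⟩
    convert hr'' x hx using 1
    rw [pow_succ]; field_simp; ring

lemma exists_pow_sub_le (N : ℕ) : ∃ C : ℝ, 1 ≤ C ∧ ∀ (g : ℕ → ℝ → ℝ) (u v l : ℝ), u ≤ v →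
    DerivChain g N (Set.Icc u v) → (∀ x ∈ Set.Icc u v, 1 ≤ |g N x|) →
    (∀ x ∈ Set.Icc u v, |g 0 x| ≤ l) → (v - u) ^ N ≤ C * l := by
  obtain ⟨c, hc, H⟩ := exists_subinterval_le_abs N
  refine ⟨max 1 (1 / c), le_max_left _ _, fun g u v l huv hg h hl => ?_⟩
  obtain ⟨p, hup, hpv, hp⟩ := H g u v huv hg h
  have hL : 0 ≤ (v - u) / 3 ^ N := div_nonneg (sub_nonneg.2 huv) (by positivity)
  have h1 := hp p ⟨le_rfl, by linarith⟩
  have h2 := hl p ⟨hup, by linarith⟩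
  have hl0 : 0 ≤ l := (abs_nonneg _).trans h2
  calc (v - u) ^ N = 1 / c * (c * (v - u) ^ N) := by field_simp
    _ ≤ 1 / c * l := by gcongr; exact h1.trans h2
    _ ≤ _ := by gcongr; exact le_max_right _ _

/-- A zero-splitting principle for subadditive interval functions. -/
lemma le_two_pow_mul_of_splitting {F : ℝ → ℝ → ℝ} {A a b : ℝ} (hA : 0 ≤ A)
    (hF : ∀ u v w, a ≤ u → u ≤ v → v ≤ w → w ≤ b → F u w ≤ F u v + F v w)
    (q : ℝ → ℝ → Prop) (hq : ∀ u v u' v', u ≤ u' → v' ≤ v → q u v → q u' v')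
    (N : ℕ) (g : ℕ → ℝ → ℝ)
    (hinj : ∀ j < N, ∀ u v, a ≤ u → u ≤ v → v ≤ b → q u v →
      (∀ x ∈ Set.Ioo u v, g (j + 1) x ≠ 0) → Set.InjOn (g j) (Set.Ioo u v))
    (hN : ∀ u v, a ≤ u → u ≤ v → v ≤ b → q u v → ∀ x ∈ Set.Ioo u v, g N x ≠ 0)
    (H : ∀ u v, a ≤ u → u ≤ v → v ≤ b → q u v → (∀ x ∈ Set.Ioo u v, g 0 x ≠ 0) → F u v ≤ A) :
    ∀ u v, a ≤ u → u ≤ v → v ≤ b → q u v → F u v ≤ 2 ^ N * A := by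
  induction N generalizing g A with
  | zero =>
    intro u v hu huv hv h
    simpa using H u v hu huv hv h (hN u v hu huv hv h)
  | succ N ih =>
    intro u v hu huv hv h
    rw [pow_succ, mul_assoc]
    refine ih (by positivity) (fun j => g (j + 1)) (fun j hj => hinj (j + 1) (by omega)) hN ?_
      u v hu huv hv h
    intro u v hu huv hv h h1
    by_cases h0 : ∀ x ∈ Set.Ioo u v, g 0 x ≠ 0
    · linarith [H u v hu huv hv h h0]
    push Not at h0
    obtain ⟨z, hz, hz0⟩ := h0
    have hi := hinj 0 (by omega) u v hu huv hv h h1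
    have e1 := H u z hu hz.1.le (hz.2.le.trans hv) (hq _ _ _ _ le_rfl hz.2.le h)
      fun x hx hx0 => hx.2.ne (hi ⟨hx.1, hx.2.trans hz.2⟩ hz (hx0.trans hz0.symm))
    have e2 := H z v (hu.trans hz.1.le) hz.2.le hv (hq _ _ _ _ hz.1.le le_rfl h)
      fun x hx hx0 => hx.1.ne' (hi ⟨hz.1.trans hx.1, hx.2⟩ hz (hx0.trans hz0.symm))
    linarith [hF u z v hu hz.1.le hz.2.le hv]

lemma injOn_Ioo_of_deriv_ne_zero {g g' : ℝ → ℝ} {a b u v : ℝ}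
    (hg : ∀ x ∈ Set.Icc a b, HasDerivWithinAt g (g' x) (Set.Icc a b) x)
    (hu : a ≤ u) (hv : v ≤ b) (h : ∀ x ∈ Set.Ioo u v, g' x ≠ 0) :
    Set.InjOn g (Set.Ioo u v) := by
  have key : ∀ x ∈ Set.Ioo u v, ∀ y ∈ Set.Ioo u v, x < y → g x ≠ g y := by
    intro x hx y hy hxy e
    obtain ⟨z, hz, hz'⟩ := exists_deriv_mul_sub hg (hu.trans hx.1.le) hxy (hy.2.le.trans hv)
    rw [e, sub_self, eq_comm, mul_eq_zero] at hz'
    rcases hz' with hz' | hz'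
    · exact h z ⟨hx.1.trans hz.1, hz.2.trans hy.2⟩ hz'
    · linarith
  intro x hx y hy e
  rcases lt_trichotomy x y with hxy | hxy | hxy
  · exact absurd e (key x hx y hy hxy)
  · exact hxy
  · exact absurd e.symm (key y hy x hx hxy)

lemma nonneg_or_nonpos_of_ne_zero {h : ℝ → ℝ} {u v : ℝ} (huv : u < v)
    (hc : ContinuousOn h (Set.Icc u v)) (h0 : ∀ x ∈ Set.Ioo u v, h x ≠ 0) :
    (∀ x ∈ Set.Icc u v, 0 ≤ h x) ∨ (∀ x ∈ Set.Icc u v, h x ≤ 0) := by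
  by_contra! H
  obtain ⟨⟨x, hx, hx'⟩, ⟨y, hy, hy'⟩⟩ := H
  have hcl : closure (Set.Ioo u v) = Set.Icc u v := closure_Ioo huv.ne
  have key : ∀ x ∈ Set.Icc u v, ∀ s : Set ℝ, IsOpen s → h x ∈ s →
      ∃ y ∈ Set.Ioo u v, h y ∈ s := by
    intro x hx s hs hxs
    have h1 : ∀ᶠ y in nhdsWithin x (Set.Ioo u v), h y ∈ s :=
      ((hc x hx).mono Set.Ioo_subset_Icc_self).eventually (hs.mem_nhds hxs)
    have : (nhdsWithin x (Set.Ioo u v)).NeBot := mem_closure_iff_nhdsWithin_neBot.1 (hcl ▸ hx)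
    obtain ⟨y, hy1, hy2⟩ := (h1.and self_mem_nhdsWithin).exists
    exact ⟨y, hy2, hy1⟩
  obtain ⟨x', hx1, hx2⟩ := key x hx _ isOpen_Iio hx'
  obtain ⟨y', hy1, hy2⟩ := key y hy _ isOpen_Ioi hy'
  obtain ⟨z, hz, hz0⟩ := isPreconnected_Ioo.intermediate_value hx1 hy1
    (hc.mono Set.Ioo_subset_Icc_self) ⟨le_of_lt hx2, le_of_lt hy2⟩
  exact h0 z hz hz0

lemma intervalIntegral_abs_deriv_inv_le {q q' : ℝ → ℝ} {u v e : ℝ} (huv : u ≤ v) (he : 0 < e)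
    (hq : ∀ x ∈ Set.Icc u v, HasDerivWithinAt q (q' x) (Set.Icc u v) x)
    (hqc : ContinuousOn q' (Set.Icc u v)) (hqe : ∀ x ∈ Set.Icc u v, e ≤ |q x|)
    (hs : (∀ x ∈ Set.Icc u v, 0 ≤ q' x) ∨ (∀ x ∈ Set.Icc u v, q' x ≤ 0)) :
    ∫ x in u..v, |q' x| / q x ^ 2 ≤ 2 / e := by
  have hq0 : ∀ x ∈ Set.Icc u v, q x ≠ 0 := fun x hx h => by
    have := hqe x hx; rw [h, abs_zero] at this; linarith
  have hcq : ContinuousOn q (Set.Icc u v) := fun x hx => (hq x hx).continuousWithinAt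
  have hinv : ∀ x ∈ Set.Icc u v, |(q x)⁻¹| ≤ 1 / e := fun x hx => by
    rw [abs_inv, ← one_div]; exact one_div_le_one_div_of_le he (hqe x hx)
  have hftc : ∫ x in u..v, -q' x / q x ^ 2 = (q v)⁻¹ - (q u)⁻¹ := by
    refine intervalIntegral.integral_eq_sub_of_hasDerivAt_of_le huv (hcq.inv₀ hq0) ?_ ?_
    · intro x hx
      have hx' := Set.Ioo_subset_Icc_self hx
      exact ((hq x hx').hasDerivAt (Icc_mem_nhds hx.1 hx.2)).inv (hq0 x hx')
    · exact (hqc.neg.div (hcq.pow 2) fun x hx => pow_ne_zero _ (hq0 x hx)).intervalIntegrable_of_Icc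
        huv
  have hbd : |(q v)⁻¹ - (q u)⁻¹| ≤ 2 / e := by
    have := abs_sub (q v)⁻¹ (q u)⁻¹
    have h1 := hinv v ⟨huv, le_rfl⟩
    have h2 := hinv u ⟨le_rfl, huv⟩
    have : 2 / e = 1 / e + 1 / e := by ring
    linarith
  rw [abs_le] at hbd
  rcases hs with hs | hs
  · have : ∫ x in u..v, |q' x| / q x ^ 2 = -∫ x in u..v, -q' x / q x ^ 2 := by
      rw [← intervalIntegral.integral_neg]
      refine intervalIntegral.integral_congr fun x hx => ?_
      rw [Set.uIcc_of_le huv] at hx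
      simp only [abs_of_nonneg (hs x hx)]; ring
    rw [this, hftc]; linarith
  · have : ∫ x in u..v, |q' x| / q x ^ 2 = ∫ x in u..v, -q' x / q x ^ 2 := by
      refine intervalIntegral.integral_congr fun x hx => ?_
      rw [Set.uIcc_of_le huv] at hx
      simp only [abs_of_nonpos (hs x hx)]
    rw [this, hftc]; linarith

/-- First-derivative van der Corput estimate when the phase derivative is a product of two
functions, each of them monotone and bounded away from zero. -/
lemma norm_integral_exp_le {p q r q' r' : ℝ → ℝ} {u v e h lam : ℝ} (huv : u ≤ v) (he : 0 < e)
    (hh : 0 < h) (hlam : lam ≠ 0)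
    (hp : ∀ x ∈ Set.Icc u v, HasDerivWithinAt p (q x * r x) (Set.Icc u v) x)
    (hq : ∀ x ∈ Set.Icc u v, HasDerivWithinAt q (q' x) (Set.Icc u v) x)
    (hr : ∀ x ∈ Set.Icc u v, HasDerivWithinAt r (r' x) (Set.Icc u v) x)
    (hqc : ContinuousOn q' (Set.Icc u v)) (hrc : ContinuousOn r' (Set.Icc u v))
    (hqe : ∀ x ∈ Set.Icc u v, e ≤ |q x|) (hrh : ∀ x ∈ Set.Icc u v, h ≤ |r x|)
    (hqs : (∀ x ∈ Set.Icc u v, 0 ≤ q' x) ∨ (∀ x ∈ Set.Icc u v, q' x ≤ 0))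
    (hrs : (∀ x ∈ Set.Icc u v, 0 ≤ r' x) ∨ (∀ x ∈ Set.Icc u v, r' x ≤ 0)) :
    ‖∫ x in u..v, Complex.exp (Complex.I * (lam : ℂ) * (p x : ℂ))‖ ≤ 6 / (|lam| * e * h) := by
  have hq0 : ∀ x ∈ Set.Icc u v, q x ≠ 0 := fun x hx h => by
    have := hqe x hx; rw [h, abs_zero] at this; linarith
  have hr0 : ∀ x ∈ Set.Icc u v, r x ≠ 0 := fun x hx h => by
    have := hrh x hx; rw [h, abs_zero] at this; linarith
  have hcp : ContinuousOn p (Set.Icc u v) := fun x hx => (hp x hx).continuousWithinAt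
  have hcq : ContinuousOn q (Set.Icc u v) := fun x hx => (hq x hx).continuousWithinAt
  have hcr : ContinuousOn r (Set.Icc u v) := fun x hx => (hr x hx).continuousWithinAt
  set E : ℝ → ℂ := fun x => Complex.exp (Complex.I * (lam : ℂ) * (p x : ℂ)) with hE
  set w : ℝ → ℝ := fun x => (q x)⁻¹ * (r x)⁻¹ with hw
  set w' : ℝ → ℝ := fun x => -q' x / q x ^ 2 * (r x)⁻¹ + (q x)⁻¹ * (-r' x / r x ^ 2) with hw'
  have hEn : ∀ x, ‖E x‖ = 1 := fun x => by
    have : Complex.I * (lam : ℂ) * (p x : ℂ) = ((lam * p x : ℝ) : ℂ) * Complex.I := by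
      push_cast; ring
    simp only [hE, this, Complex.norm_exp_ofReal_mul_I]
  have hcE : ContinuousOn E (Set.Icc u v) :=
    Complex.continuous_exp.comp_continuousOn
      (continuousOn_const.mul (Complex.continuous_ofReal.comp_continuousOn hcp))
  have hcw : ContinuousOn w (Set.Icc u v) := (hcq.inv₀ hq0).mul (hcr.inv₀ hr0)
  have hcw' : ContinuousOn w' (Set.Icc u v) :=
    ((hqc.neg.div (hcq.pow 2) fun x hx => pow_ne_zero _ (hq0 x hx)).mul (hcr.inv₀ hr0)).add
      ((hcq.inv₀ hq0).mul (hrc.neg.div (hcr.pow 2) fun x hx => pow_ne_zero _ (hr0 x hx)))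
  have hcw'' : ContinuousOn (fun x => (w' x : ℂ)) (Set.Icc u v) :=
    Complex.continuous_ofReal.comp_continuousOn hcw'
  have hiE : IntervalIntegrable (fun x => Complex.I * lam * E x) volume u v :=
    (continuousOn_const.mul hcE).intervalIntegrable_of_Icc huv
  have hiw : IntervalIntegrable (fun x => E x * (w' x : ℂ)) volume u v :=
    (hcE.mul hcw'').intervalIntegrable_of_Icc huv
  have hftc : ∫ x in u..v, (Complex.I * lam * E x + E x * (w' x : ℂ)) =
      E v * (w v : ℂ) - E u * (w u : ℂ) := by
    refine intervalIntegral.integral_eq_sub_of_hasDerivAt_of_le huv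
      (f := fun x => E x * (w x : ℂ))
      (hcE.mul (Complex.continuous_ofReal.comp_continuousOn hcw)) ?_ (hiE.add hiw)
    intro x hx
    have hx' := Set.Ioo_subset_Icc_self hx
    have hn := Icc_mem_nhds hx.1 hx.2
    have h1 : HasDerivAt w (w' x) x :=
      (((hq x hx').hasDerivAt hn).inv (hq0 x hx')).mul (((hr x hx').hasDerivAt hn).inv (hr0 x hx'))
    have h2 := (((hp x hx').hasDerivAt hn).ofReal_comp.const_mul (Complex.I * (lam : ℂ))).cexp
    refine (h2.mul h1.ofReal_comp).congr_deriv ?_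
    have hqx : (q x : ℂ) ≠ 0 := by exact_mod_cast hq0 x hx'
    have hrx : (r x : ℂ) ≠ 0 := by exact_mod_cast hr0 x hx'
    simp only [hE, hw]
    push_cast
    field_simp
  rw [intervalIntegral.integral_add hiE hiw, intervalIntegral.integral_const_mul] at hftc
  have hwb : ∀ x ∈ Set.Icc u v, ‖E x * (w x : ℂ)‖ ≤ 1 / (e * h) := fun x hx => by
    rw [norm_mul, hEn, one_mul, Complex.norm_real, Real.norm_eq_abs, abs_mul, abs_inv, abs_inv,
      ← mul_inv, ← one_div]
    exact one_div_le_one_div_of_le (by positivity)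
      (mul_le_mul (hqe x hx) (hrh x hx) hh.le (abs_nonneg _))
  have hw'b : ∀ x ∈ Set.Icc u v, ‖E x * (w' x : ℂ)‖ ≤
      |q' x| / q x ^ 2 * (1 / h) + (1 / e) * (|r' x| / r x ^ 2) := fun x hx => by
    rw [norm_mul, hEn, one_mul, Complex.norm_real, Real.norm_eq_abs]
    refine (abs_add_le _ _).trans ?_
    rw [abs_mul, abs_mul, abs_div, abs_div, abs_neg, abs_neg, abs_of_nonneg (sq_nonneg (q x)),
      abs_of_nonneg (sq_nonneg (r x)), abs_inv, abs_inv, ← one_div, ← one_div]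
    gcongr
    · exact hrh x hx
    · exact hqe x hx
  have ha1 : IntervalIntegrable (fun x => |q' x| / q x ^ 2 * (1 / h)) volume u v :=
    ((hqc.abs.div (hcq.pow 2) fun x hx => pow_ne_zero _ (hq0 x hx)).mul
      continuousOn_const).intervalIntegrable_of_Icc huv
  have ha2 : IntervalIntegrable (fun x => (1 / e) * (|r' x| / r x ^ 2)) volume u v :=
    (continuousOn_const.mul
      (hrc.abs.div (hcr.pow 2) fun x hx => pow_ne_zero _ (hr0 x hx))).intervalIntegrable_of_Icc huv
  have hint : ‖∫ x in u..v, E x * (w' x : ℂ)‖ ≤ 4 / (e * h) := by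
    calc ‖∫ x in u..v, E x * (w' x : ℂ)‖
        ≤ ∫ x in u..v, ‖E x * (w' x : ℂ)‖ := intervalIntegral.norm_integral_le_integral_norm huv
      _ ≤ ∫ x in u..v, (|q' x| / q x ^ 2 * (1 / h) + (1 / e) * (|r' x| / r x ^ 2)) :=
          intervalIntegral.integral_mono_on huv hiw.norm (ha1.add ha2) hw'b
      _ = (∫ x in u..v, |q' x| / q x ^ 2) * (1 / h) + (1 / e) * ∫ x in u..v, |r' x| / r x ^ 2 := by
          rw [intervalIntegral.integral_add ha1 ha2, intervalIntegral.integral_mul_const,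
            intervalIntegral.integral_const_mul]
      _ ≤ 2 / e * (1 / h) + 1 / e * (2 / h) := by
          gcongr
          · exact intervalIntegral_abs_deriv_inv_le huv he hq hqc hqe hqs
          · exact intervalIntegral_abs_deriv_inv_le huv hh hr hrc hrh hrs
      _ = 4 / (e * h) := by field_simp; ring
  have hkey : |lam| * ‖∫ x in u..v, E x‖ ≤ 6 / (e * h) := by
    have e1 : Complex.I * lam * ∫ x in u..v, E x =
        E v * (w v : ℂ) - E u * (w u : ℂ) - ∫ x in u..v, E x * (w' x : ℂ) := by
      rw [← hftc]; ring
    have e2 : |lam| * ‖∫ x in u..v, E x‖ = ‖Complex.I * lam * ∫ x in u..v, E x‖ := by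
      simp
    rw [e2, e1]
    have t1 := norm_sub_le (E v * (w v : ℂ) - E u * (w u : ℂ)) (∫ x in u..v, E x * (w' x : ℂ))
    have t2 := norm_sub_le (E v * (w v : ℂ)) (E u * (w u : ℂ))
    have t3 := hwb v ⟨huv, le_rfl⟩
    have t4 := hwb u ⟨le_rfl, huv⟩
    have t5 : 6 / (e * h) = 1 / (e * h) + 1 / (e * h) + 4 / (e * h) := by ring
    linarith
  have hl : 0 < |lam| := abs_pos.2 hlam
  rw [le_div_iff₀ (by positivity)]
  rw [le_div_iff₀ (by positivity)] at hkey
  linarith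

lemma derivChain_eval (Q : Polynomial ℝ) (c : ℝ) (N : ℕ) (s : Set ℝ) :
    DerivChain (fun j x => c * (Polynomial.derivative^[j] Q).eval x) N s := by
  intro j _ x _
  simp only [Function.iterate_succ_apply']
  exact ((Polynomial.derivative^[j] Q).hasDerivAt x).hasDerivWithinAt.const_mul c

lemma eval_iterate_derivative_of_natDegree_le {Q : Polynomial ℝ} {m : ℕ} (h : Q.natDegree ≤ m)
    (x : ℝ) : (Polynomial.derivative^[m] Q).eval x = m.factorial * Q.coeff m := by
  have h0 : (Polynomial.derivative^[m] Q).natDegree ≤ 0 :=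
    (Polynomial.natDegree_iterate_derivative Q m).trans (by omega)
  rw [Polynomial.eq_C_of_natDegree_le_zero h0, Polynomial.eval_C,
    Polynomial.coeff_iterate_derivative]
  simp [Nat.descFactorial_self]

lemma one_le_factorial_real (n : ℕ) : (1 : ℝ) ≤ n.factorial := by
  exact_mod_cast Nat.factorial_pos n

lemma exists_abs_coeff_le (m : ℕ) : ∃ C : ℝ, 1 ≤ C ∧ ∀ (G : Polynomial ℝ) (e : ℝ),
    G.natDegree ≤ m → (∀ x ∈ Set.Icc (0 : ℝ) 1, |G.eval x| ≤ e) → ∀ i, |G.coeff i| ≤ C * e := by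
  induction m with
  | zero =>
    refine ⟨1, le_rfl, fun G e hG h i => ?_⟩
    have h0 := h 0 (by simp)
    rw [Polynomial.eq_C_of_natDegree_le_zero hG] at h0 ⊢
    rw [Polynomial.coeff_C]
    split_ifs
    · simpa using h0
    · simpa using (abs_nonneg _).trans h0
  | succ m ih =>
    obtain ⟨C, hC, ih⟩ := ih
    obtain ⟨K, hK, H⟩ := exists_pow_sub_le (m + 1)
    refine ⟨C * (1 + K), by nlinarith, fun G e hG h i => ?_⟩
    have he : 0 ≤ e := (abs_nonneg _).trans (h 0 (by simp))
    have hlead : |G.coeff (m + 1)| ≤ K * e := by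
      by_cases ha : G.coeff (m + 1) = 0
      · rw [ha, abs_zero]; positivity
      have := H (fun j x => (G.coeff (m + 1))⁻¹ * (Polynomial.derivative^[j] G).eval x) 0 1
        (|G.coeff (m + 1)|⁻¹ * e) zero_le_one (derivChain_eval G _ _ _)
        (fun x _ => by
          rw [eval_iterate_derivative_of_natDegree_le hG, mul_comm, mul_assoc,
            mul_inv_cancel₀ ha, mul_one, Nat.abs_cast]
          exact one_le_factorial_real _)
        (fun x hx => by
          rw [abs_mul, abs_inv]
          exact mul_le_mul_of_nonneg_left (h x hx) (by positivity))
      have hpos : 0 < |G.coeff (m + 1)| := abs_pos.2 ha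
      rw [sub_zero, one_pow] at this
      field_simp at this
      exact this
    by_cases hi : i = m + 1
    · subst hi
      refine hlead.trans ?_
      gcongr
      nlinarith
    set G' := G - Polynomial.C (G.coeff (m + 1)) * Polynomial.X ^ (m + 1) with hG'
    have hcoeff : G'.coeff i = G.coeff i := by
      simp [hG', Polynomial.coeff_X_pow, hi]
    have hdeg : G'.natDegree ≤ m := by
      rw [Polynomial.natDegree_le_iff_coeff_eq_zero]
      intro k hk
      rcases (Nat.succ_le_of_lt hk).eq_or_lt with rfl | hk'
      · simp [hG']
      · have : k ≠ m + 1 := by omega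
        simp [hG', Polynomial.coeff_X_pow, this,
          Polynomial.coeff_eq_zero_of_natDegree_lt (hG.trans_lt hk')]
    rw [← hcoeff, mul_assoc]
    refine ih G' ((1 + K) * e) hdeg (fun x hx => ?_) i
    simp only [hG', Polynomial.eval_sub, Polynomial.eval_mul, Polynomial.eval_C,
      Polynomial.eval_pow, Polynomial.eval_X]
    refine (abs_sub _ _).trans ?_
    have h1 : |G.coeff (m + 1) * x ^ (m + 1)| ≤ K * e := by
      rw [abs_mul, abs_of_nonneg (pow_nonneg hx.1 _)]
      exact (mul_le_of_le_one_right (abs_nonneg _) (pow_le_one₀ hx.1 hx.2)).trans hlead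
    linarith [h x hx]

lemma abs_eval_le_of_abs_coeff_le {G : Polynomial ℝ} {m : ℕ} {A B x : ℝ} (hG : G.natDegree ≤ m)
    (hA : ∀ i, |G.coeff i| ≤ A) (hB : 1 ≤ B) (hx : |x| ≤ B) :
    |G.eval x| ≤ (m + 1) * (A * B ^ m) := by
  rw [Polynomial.eval_eq_sum_range' (Nat.lt_succ_of_le hG)]
  refine (Finset.abs_sum_le_sum_abs _ _).trans ?_
  have : ∀ i ∈ Finset.range (m + 1), |G.coeff i * x ^ i| ≤ A * B ^ m := by
    intro i hi
    rw [abs_mul, abs_pow]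
    have hi' : i ≤ m := by simpa [Nat.lt_succ_iff] using hi
    refine mul_le_mul (hA i) ?_ (by positivity) ((abs_nonneg _).trans (hA i))
    exact (pow_le_pow_left₀ (abs_nonneg x) hx i).trans (pow_le_pow_right₀ hB hi')
  refine (Finset.sum_le_card_nsmul _ _ _ this).trans ?_
  simp

/-- Sublevel estimate on intervals confined to `[-B, B]`. -/
lemma exists_pow_sub_le_of_bounded (m : ℕ) (B : ℝ) (hB : 1 ≤ B) : ∃ C : ℝ, 1 ≤ C ∧
    ∀ (Q : Polynomial ℝ) (k : ℕ) (s t e : ℝ), Q.natDegree ≤ m → |Q.coeff k| = 1 →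
    -B ≤ s → s ≤ t → t ≤ B → (∀ x ∈ Set.Icc s t, |Q.eval x| ≤ e) → (t - s) ^ m ≤ C * e := by
  obtain ⟨C, hC, H⟩ := exists_abs_coeff_le m
  have hC' : 1 ≤ C * ((m + 1) * (C * (2 * B) ^ m)) := by
    have h1 : (1 : ℝ) ≤ (2 * B) ^ m := one_le_pow₀ (by linarith)
    have h2 : (1 : ℝ) ≤ C * (2 * B) ^ m := one_le_mul_of_one_le_of_one_le hC h1
    exact one_le_mul_of_one_le_of_one_le hC (one_le_mul_of_one_le_of_one_le (by simp) h2)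
  refine ⟨C * ((m + 1) * (C * (2 * B) ^ m)), hC', fun Q k s t e hQ hk hs hst ht h => ?_⟩
  have he : 0 ≤ e := (abs_nonneg _).trans (h s ⟨le_rfl, hst⟩)
  rcases hst.eq_or_lt with rfl | hst
  · rcases Nat.eq_zero_or_pos m with rfl | hm
    · have := H Q e hQ (fun x _ => by
        have := h s ⟨le_rfl, le_rfl⟩
        rw [Polynomial.eq_C_of_natDegree_le_zero hQ] at this ⊢
        simpa using this) k
      rw [hk] at this
      simp only [pow_zero, Nat.cast_zero]
      nlinarith
    · rw [sub_self, zero_pow hm.ne']; positivity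
  have hL : 0 < t - s := sub_pos.2 hst
  set G := Q.comp (Polynomial.C (t - s) * Polynomial.X + Polynomial.C s) with hGdef
  have hGe : ∀ z, G.eval z = Q.eval ((t - s) * z + s) := fun z => by simp [hGdef]
  have hGd : G.natDegree ≤ m := by
    refine Polynomial.natDegree_comp_le.trans ?_
    calc _ ≤ Q.natDegree * 1 := Nat.mul_le_mul_left _ (Polynomial.natDegree_linear_le)
      _ ≤ m := by omega
  have hGc := H G e hGd fun z hz => by
    rw [hGe]
    exact h _ ⟨by nlinarith [hz.1], by nlinarith [hz.2]⟩
  have hQb : ∀ y ∈ Set.Icc (0 : ℝ) 1,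
      |Q.eval y| ≤ (m + 1) * (C * e * (2 * B / (t - s)) ^ m) := fun y hy => by
    have : Q.eval y = G.eval ((y - s) / (t - s)) := by
      rw [hGe]; congr 1; field_simp; ring
    rw [this]
    refine abs_eval_le_of_abs_coeff_le hGd hGc ?_ ?_
    · rw [le_div_iff₀ hL]; linarith
    · rw [abs_div, abs_of_pos hL]
      gcongr
      rw [abs_le]; constructor <;> linarith [hy.1, hy.2]
  have := H Q _ hQ hQb k
  rw [hk, div_pow] at this
  have hLm : 0 < (t - s) ^ m := by positivity
  calc (t - s) ^ m = 1 * (t - s) ^ m := (one_mul _).symm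
    _ ≤ (C * ((m + 1) * (C * e * ((2 * B) ^ m / (t - s) ^ m)))) * (t - s) ^ m := by gcongr
    _ = _ := by field_simp

lemma half_le_abs_eval_iterate_derivative {G : Polynomial ℝ} {m n : ℕ} {z : ℝ}
    (hG : G.natDegree ≤ m) (hc : ∀ i, |G.coeff i| ≤ 1) (hn : |G.coeff n| = 1)
    (hz : |z| * (2 * (m + 1) * m.factorial) ≤ 1) :
    1 / 2 ≤ |(Polynomial.derivative^[n] G).eval z| := by
  have hm1 : (1 : ℝ) ≤ m.factorial := one_le_factorial_real m
  have hz1 : |z| ≤ 1 := by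
    have h1 : (1 : ℝ) ≤ 2 * (m + 1) * m.factorial :=
      one_le_mul_of_one_le_of_one_le (by linarith [(Nat.cast_nonneg m : (0 : ℝ) ≤ m)]) hm1
    nlinarith [abs_nonneg z]
  set D := Polynomial.derivative^[n] G with hD
  have hcoeff : ∀ i, |D.coeff i| ≤ m.factorial := by
    intro i
    rw [hD, Polynomial.coeff_iterate_derivative, nsmul_eq_mul, abs_mul, Nat.abs_cast]
    rcases le_or_gt (i + n) m with h | h
    · have h1 : ((i + n).descFactorial n : ℝ) ≤ m.factorial := by
        have h2 : (i + n).descFactorial n ≤ (i + n).factorial := by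
          rw [← Nat.factorial_mul_descFactorial (Nat.le_add_left n i)]
          exact Nat.le_mul_of_pos_left _ (Nat.factorial_pos _)
        exact_mod_cast h2.trans (Nat.factorial_le h)
      calc _ ≤ (m.factorial : ℝ) * 1 := by gcongr; exact hc _
        _ = _ := mul_one _
    · rw [Polynomial.coeff_eq_zero_of_natDegree_lt (hG.trans_lt h), abs_zero, mul_zero]
      positivity
  have hDd : D.natDegree < m + 1 :=
    Nat.lt_succ_of_le ((Polynomial.natDegree_iterate_derivative G n).trans (by omega))
  have h0 : 1 ≤ |D.coeff 0| := by
    rw [hD, Polynomial.coeff_iterate_derivative, nsmul_eq_mul, abs_mul, Nat.abs_cast, zero_add, hn,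
      mul_one, Nat.descFactorial_self]
    exact one_le_factorial_real n
  have hsum : |∑ i ∈ Finset.range m, D.coeff (i + 1) * z ^ (i + 1)| ≤ 1 / 2 := by
    refine (Finset.abs_sum_le_sum_abs _ _).trans ?_
    have : ∀ i ∈ Finset.range m, |D.coeff (i + 1) * z ^ (i + 1)| ≤ m.factorial * |z| := by
      intro i _
      rw [abs_mul, abs_pow, pow_succ]
      refine mul_le_mul (hcoeff _) ?_ (by positivity) (by positivity)
      exact mul_le_of_le_one_left (abs_nonneg _) (pow_le_one₀ (abs_nonneg _) hz1)
    refine (Finset.sum_le_card_nsmul _ _ _ this).trans ?_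
    rw [Finset.card_range, nsmul_eq_mul]
    have : 0 ≤ (m.factorial : ℝ) * |z| := by positivity
    nlinarith
  have e : D.eval z = (∑ i ∈ Finset.range m, D.coeff (i + 1) * z ^ (i + 1)) + D.coeff 0 := by
    rw [Polynomial.eval_eq_sum_range' hDd, Finset.sum_range_succ']; simp
  have h3 := abs_sub_abs_le_abs_sub (D.coeff 0) (-∑ i ∈ Finset.range m, D.coeff (i + 1) * z ^ (i + 1))
  rw [abs_neg, sub_neg_eq_add, add_comm (D.coeff 0), ← e] at h3
  linarith

lemma eval_reflect_inv_mul_pow {Q : Polynomial ℝ} {m : ℕ} (hQ : Q.natDegree ≤ m) {x : ℝ}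
    (hx : x ≠ 0) : (Polynomial.reflect m Q).eval x⁻¹ * x ^ m = Q.eval x := by
  let _ := invertibleOfNonzero hx
  have := Polynomial.eval₂_reflect_mul_pow (RingHom.id ℝ) x m Q hQ
  rwa [invOf_eq_inv] at this

/-- Sublevel estimate far from the origin, at a single dyadic scale: the reflected polynomial has
an `n`-th derivative bounded below near zero. -/
lemma exists_pow_sub_mul_pow_le (m n : ℕ) (hnm : 2 * n ≤ m) : ∃ C : ℝ, 1 ≤ C ∧
    ∀ (Q : Polynomial ℝ) (s t e : ℝ), Q.natDegree ≤ m → (∀ i, |Q.coeff i| ≤ 1) →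
    |Q.coeff (m - n)| = 1 → 2 * (m + 1) * m.factorial ≤ s → s ≤ t → t ≤ 2 * s →
    (∀ x ∈ Set.Icc s t, |Q.eval x| ≤ e) → (t - s) ^ n * s ^ (m - 2 * n) ≤ C * e := by
  obtain ⟨K, hK, H⟩ := exists_pow_sub_le n
  refine ⟨2 ^ n * (K * 2), ?_, fun Q s t e hQ hc hn hs hst ht h => ?_⟩
  · exact one_le_mul_of_one_le_of_one_le (one_le_pow₀ one_le_two) (by linarith)
  have hB : (0 : ℝ) < 2 * (m + 1) * m.factorial := by positivity
  have hs0 : 0 < s := hB.trans_le hs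
  have ht0 : 0 < t := hs0.trans_le hst
  set R := Polynomial.reflect m Q with hR
  have hRd : R.natDegree ≤ m := by
    rw [Polynomial.natDegree_le_iff_coeff_eq_zero]
    intro k hk
    rw [hR, Polynomial.coeff_reflect, Polynomial.revAt_eq_self_of_lt hk]
    exact Polynomial.coeff_eq_zero_of_natDegree_lt (hQ.trans_lt hk)
  have hRc : ∀ i, |R.coeff i| ≤ 1 := fun i => by
    rw [hR, Polynomial.coeff_reflect]; exact hc _
  have hRn : |R.coeff n| = 1 := by
    rw [hR, Polynomial.coeff_reflect, Polynomial.revAt_le (by omega)]; exact hn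
  have hz : ∀ z ∈ Set.Icc t⁻¹ s⁻¹, 0 < z ∧ s ≤ z⁻¹ ∧ z⁻¹ ≤ t := fun z hz => by
    have hz0 : 0 < z := (inv_pos.2 ht0).trans_le hz.1
    exact ⟨hz0, (le_inv_comm₀ hs0 hz0).2 hz.2, (inv_le_comm₀ hz0 ht0).2 hz.1⟩
  have key := H (fun j x => 2 * (Polynomial.derivative^[j] R).eval x) t⁻¹ s⁻¹ (2 * (e / s ^ m))
    (inv_anti₀ hs0 hst) (derivChain_eval R _ _ _)
    (fun z hz' => by
      obtain ⟨hz0, hz1, hz2⟩ := hz z hz'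
      have := half_le_abs_eval_iterate_derivative hRd hRc hRn (z := z) (by
        rw [abs_of_pos hz0]
        calc z * (2 * (m + 1) * m.factorial) ≤ z * z⁻¹ := by gcongr; exact hs.trans hz1
          _ = 1 := mul_inv_cancel₀ hz0.ne')
      rw [abs_mul, abs_two]; linarith)
    (fun z hz' => by
      obtain ⟨hz0, hz1, hz2⟩ := hz z hz'
      have h1 := eval_reflect_inv_mul_pow hQ (inv_pos.2 hz0).ne'
      rw [inv_inv] at h1
      have h2 := h z⁻¹ ⟨hz1, hz2⟩
      rw [← h1, abs_mul, abs_of_pos (pow_pos (inv_pos.2 hz0) m)] at h2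
      rw [abs_mul, abs_two]
      have h3 : |R.eval z| * s ^ m ≤ e := le_trans (by gcongr) h2
      simp only [Function.iterate_zero, id]
      gcongr
      rwa [le_div_iff₀ (by positivity)])
  have hlen : (t - s) / (2 * s ^ 2) ≤ s⁻¹ - t⁻¹ := by
    have : s⁻¹ - t⁻¹ = (t - s) / (t * s) := by field_simp
    rw [this]
    apply div_le_div_of_nonneg_left (sub_nonneg.2 hst) (by positivity)
    nlinarith
  have h4 : ((t - s) / (2 * s ^ 2)) ^ n ≤ K * (2 * (e / s ^ m)) :=
    le_trans (pow_le_pow_left₀ (div_nonneg (sub_nonneg.2 hst) (by positivity)) hlen n) key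
  have e1 : s ^ m = s ^ (m - 2 * n) * (s ^ 2) ^ n := by
    rw [← pow_mul, ← pow_add]; congr 1; omega
  rw [div_pow, mul_pow, e1, div_le_iff₀ (by positivity)] at h4
  have hs2 : (0 : ℝ) < (s ^ 2) ^ n := by positivity
  have hs3 : 0 < s ^ (m - 2 * n) := by positivity
  calc (t - s) ^ n * s ^ (m - 2 * n)
      ≤ (K * (2 * (e / (s ^ (m - 2 * n) * (s ^ 2) ^ n))) * (2 ^ n * (s ^ 2) ^ n)) *
        s ^ (m - 2 * n) := by gcongr
    _ = 2 ^ n * (K * 2) * e := by field_simp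

lemma exists_pow_sub_le_of_far (m n : ℕ) (hnm : 2 * n ≤ m) : ∃ C : ℝ, 1 ≤ C ∧
    ∀ (Q : Polynomial ℝ) (s t e : ℝ), Q.natDegree ≤ m → (∀ i, |Q.coeff i| ≤ 1) →
    |Q.coeff (m - n)| = 1 → 2 * (m + 1) * m.factorial ≤ s → s ≤ t → e ≤ 1 →
    (∀ x ∈ Set.Icc s t, |Q.eval x| ≤ e) → (t - s) ^ m ≤ C * e := by
  obtain ⟨K, hK, H⟩ := exists_pow_sub_mul_pow_le m n hnm
  refine ⟨2 ^ m * K ^ 2, one_le_mul_of_one_le_of_one_le (one_le_pow₀ one_le_two)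
    (one_le_pow₀ hK), fun Q s t e hQ hc hn hs hst he h => ?_⟩
  have he0 : 0 ≤ e := (abs_nonneg _).trans (h s ⟨le_rfl, hst⟩)
  have hB : (1 : ℝ) ≤ 2 * (m + 1) * m.factorial :=
    one_le_mul_of_one_le_of_one_le (by linarith [(Nat.cast_nonneg m : (0 : ℝ) ≤ m)])
      (one_le_factorial_real m)
  set s' := max s (t / 2) with hs'
  have hss' : s ≤ s' := le_max_left _ _
  have hts' : t / 2 ≤ s' := le_max_right _ _
  have hs't : s' ≤ t := max_le hst (by linarith)
  have hlen : t - s ≤ 2 * (t - s') := by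
    rcases max_cases s (t / 2) with ⟨h1, _⟩ | ⟨h1, _⟩ <;> rw [← hs'] at h1 <;> linarith
  have h1 := H Q s' t e hQ hc hn (hs.trans hss') hs't (by linarith)
    fun x hx => h x ⟨hss'.trans hx.1, hx.2⟩
  have hs'1 : 1 ≤ s' := by linarith
  have hL : 0 ≤ t - s' := sub_nonneg.2 hs't
  have h2 : (t - s') ^ m ≤ K ^ 2 * e := by
    rcases le_total (t - s') 1 with hL1 | hL1
    · calc (t - s') ^ m ≤ (t - s') ^ n := pow_le_pow_of_le_one hL hL1 (by omega)
        _ ≤ (t - s') ^ n * s' ^ (m - 2 * n) := by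
          exact le_mul_of_one_le_right (by positivity) (one_le_pow₀ hs'1)
        _ ≤ K * e := h1
        _ ≤ K ^ 2 * e := by gcongr; nlinarith
    · have h3 : (t - s') ^ (m - n) ≤ K * e := by
        calc (t - s') ^ (m - n) = (t - s') ^ n * (t - s') ^ (m - 2 * n) := by
              rw [← pow_add]; congr 1; omega
          _ ≤ (t - s') ^ n * s' ^ (m - 2 * n) := by gcongr; linarith
          _ ≤ K * e := h1
      calc (t - s') ^ m ≤ (t - s') ^ ((m - n) * 2) := pow_le_pow_right₀ hL1 (by omega)
        _ = ((t - s') ^ (m - n)) ^ 2 := pow_mul _ _ _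
        _ ≤ (K * e) ^ 2 := by gcongr
        _ ≤ K ^ 2 * e := by rw [mul_pow]; gcongr; nlinarith
  calc (t - s) ^ m ≤ (2 * (t - s')) ^ m := pow_le_pow_left₀ (by linarith) hlen m
    _ = 2 ^ m * (t - s') ^ m := mul_pow _ _ _
    _ ≤ 2 ^ m * (K ^ 2 * e) := by gcongr
    _ = _ := by ring

lemma exists_pow_sub_le_of_coeff_sub (m n : ℕ) (hnm : 2 * n ≤ m) : ∃ C : ℝ, 1 ≤ C ∧
    ∀ (Q : Polynomial ℝ) (s t e : ℝ), Q.natDegree ≤ m → (∀ i, |Q.coeff i| ≤ 1) →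
    |Q.coeff (m - n)| = 1 → s ≤ t → e ≤ 1 →
    (∀ x ∈ Set.Icc s t, |Q.eval x| ≤ e) → (t - s) ^ m ≤ C * e := by
  set B : ℝ := 2 * (m + 1) * m.factorial with hBdef
  have hB : (1 : ℝ) ≤ B :=
    one_le_mul_of_one_le_of_one_le (by linarith [(Nat.cast_nonneg m : (0 : ℝ) ≤ m)])
      (one_le_factorial_real m)
  obtain ⟨K, hK, H⟩ := exists_pow_sub_le_of_far m n hnm
  obtain ⟨K', hK', H'⟩ := exists_pow_sub_le_of_bounded m B hB
  refine ⟨3 ^ m * (K + K'), one_le_mul_of_one_le_of_one_le (one_le_pow₀ (by norm_num))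
    (by linarith), fun Q s t e hQ hc hn hst he h => ?_⟩
  have he0 : 0 ≤ e := (abs_nonneg _).trans (h s ⟨le_rfl, hst⟩)
  suffices ∃ p r, p ≤ r ∧ (t - s) / 3 ≤ r - p ∧ (r - p) ^ m ≤ (K + K') * e by
    obtain ⟨p, r, hpr, hl, hle⟩ := this
    calc (t - s) ^ m = 3 ^ m * ((t - s) / 3) ^ m := by rw [← mul_pow]; congr 1; ring
      _ ≤ 3 ^ m * ((K + K') * e) := by
        gcongr
        exact (pow_le_pow_left₀ (by linarith) hl m).trans hle
      _ = _ := by ring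
  have hbig : ∀ {y : ℝ}, y ≤ K * e → y ≤ (K + K') * e := fun hy => by nlinarith
  have hbig' : ∀ {y : ℝ}, y ≤ K' * e → y ≤ (K + K') * e := fun hy => by nlinarith
  by_cases h1 : B ≤ t - (t - s) / 3
  · exact ⟨t - (t - s) / 3, t, by linarith, by linarith, hbig <|
      H Q _ t e hQ hc hn h1 (by linarith) he fun x hx => h x ⟨by linarith [hx.1], hx.2⟩⟩
  by_cases h2 : s + (t - s) / 3 ≤ -B
  · refine ⟨s, s + (t - s) / 3, by linarith, by linarith, hbig ?_⟩
    have := H (Q.comp (Polynomial.C (-1) * Polynomial.X)) (-(s + (t - s) / 3)) (-s) e ?_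
      (fun i => ?_) ?_ (by linarith) (by linarith) he fun x hx => ?_
    · convert this using 2; ring
    · refine Polynomial.natDegree_comp_le.trans ?_
      have h3 : (Polynomial.C (-1 : ℝ) * Polynomial.X).natDegree ≤ 1 :=
        (Polynomial.natDegree_C_mul_le _ _).trans Polynomial.natDegree_X_le
      nlinarith
    · rw [Polynomial.comp_C_mul_X_coeff, abs_mul, abs_pow, abs_neg, abs_one, one_pow, mul_one]
      exact hc i
    · rw [Polynomial.comp_C_mul_X_coeff, abs_mul, abs_pow, abs_neg, abs_one, one_pow, mul_one]
      exact hn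
    · rw [Polynomial.eval_comp]
      exact h _ ⟨by simp; linarith [hx.2], by simp; linarith [hx.1]⟩
  · push Not at h1 h2
    exact ⟨s + (t - s) / 3, t - (t - s) / 3, by linarith, by linarith, hbig' <|
      H' Q (m - n) _ _ e hQ hn h2.le (by linarith) h1.le
        fun x hx => h x ⟨by linarith [hx.1], by linarith [hx.2]⟩⟩

/-- Uniform sublevel estimate for monic and SND polynomials. -/
lemma exists_pow_sub_le_of_monic_or_isSND (m : ℕ) : ∃ C : ℝ, 1 ≤ C ∧
    ∀ (Q : Polynomial ℝ) (s t e : ℝ), Q.natDegree = m → (Q.Monic ∨ IsSND Q) → s ≤ t → e ≤ 1 →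
    (∀ x ∈ Set.Icc s t, |Q.eval x| ≤ e) → (t - s) ^ m ≤ C * e := by
  obtain ⟨K, hK, H⟩ := exists_pow_sub_le m
  have hS : ∀ n, ∃ C : ℝ, 1 ≤ C ∧ (2 * n ≤ m → ∀ (Q : Polynomial ℝ) (s t e : ℝ),
      Q.natDegree ≤ m → (∀ i, |Q.coeff i| ≤ 1) → |Q.coeff (m - n)| = 1 → s ≤ t → e ≤ 1 →
      (∀ x ∈ Set.Icc s t, |Q.eval x| ≤ e) → (t - s) ^ m ≤ C * e) := fun n => by
    by_cases hn : 2 * n ≤ m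
    · obtain ⟨C, hC, h⟩ := exists_pow_sub_le_of_coeff_sub m n hn
      exact ⟨C, hC, fun _ => h⟩
    · exact ⟨1, le_rfl, fun h => absurd h hn⟩
  choose S hS1 hS using hS
  have hsum : 0 ≤ ∑ n ∈ Finset.range (m + 1), S n :=
    Finset.sum_nonneg fun n _ => zero_le_one.trans (hS1 n)
  refine ⟨K + ∑ n ∈ Finset.range (m + 1), S n, by linarith, fun Q s t e hQ hQ' hst he h => ?_⟩
  have he0 : 0 ≤ e := (abs_nonneg _).trans (h s ⟨le_rfl, hst⟩)
  rcases hQ' with hmon | ⟨hc, n, hn, hn'⟩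
  · have := H (fun j x => 1 * (Polynomial.derivative^[j] Q).eval x) s t e hst
      (derivChain_eval Q _ _ _)
      (fun x _ => by
        have hl : Q.coeff m = 1 := hQ ▸ hmon
        rw [one_mul, eval_iterate_derivative_of_natDegree_le hQ.le, hl, mul_one, Nat.abs_cast]
        exact one_le_factorial_real m)
      (fun x hx => by simpa using h x hx)
    refine this.trans ?_
    gcongr
    linarith
  · rw [hQ] at hn hn'
    refine (hS n hn Q s t e hQ.le hc hn' hst he h).trans ?_
    have := Finset.single_le_sum (f := S) (fun i _ => zero_le_one.trans (hS1 i))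
      (Finset.mem_range.2 (show n < m + 1 by omega))
    gcongr
    linarith

section Splitting

variable {F : ℝ → ℝ → ℝ} {A a b : ℝ} {p : ℝ → Prop} {g : ℕ → ℝ → ℝ}

lemma le_two_pow_mul_of_derivChain (hA : 0 ≤ A)
    (hF : ∀ u v w, a ≤ u → u ≤ v → v ≤ w → w ≤ b → F u w ≤ F u v + F v w)
    {n : ℕ} (hg : DerivChain g n (Set.Icc a b)) (hn : ∀ x ∈ Set.Icc a b, g n x ≠ 0)
    (H : ∀ u v, a ≤ u → u ≤ v → v ≤ b → (∀ x ∈ Set.Ioo u v, p x ∧ g 0 x ≠ 0) → F u v ≤ A)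
    (u v : ℝ) (hu : a ≤ u) (huv : u ≤ v) (hv : v ≤ b) (h : ∀ x ∈ Set.Ioo u v, p x) :
    F u v ≤ 2 ^ n * A :=
  le_two_pow_mul_of_splitting hA hF (fun u v => ∀ x ∈ Set.Ioo u v, p x)
    (fun _ _ _ _ h1 h2 h x hx => h x ⟨h1.trans_lt hx.1, hx.2.trans_le h2⟩) n g
    (fun j hj _ _ hu _ hv _ h => injOn_Ioo_of_deriv_ne_zero (hg j hj) hu hv h)
    (fun _ _ hu _ hv _ x hx => hn x ⟨hu.trans hx.1.le, hx.2.le.trans hv⟩)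
    (fun u v hu huv hv h1 h2 => H u v hu huv hv fun x hx => ⟨h1 x hx, h2 x hx⟩) u v hu huv hv h

lemma le_two_pow_mul_of_polynomial (hA : 0 ≤ A)
    (hF : ∀ u v w, a ≤ u → u ≤ v → v ≤ w → w ≤ b → F u w ≤ F u v + F v w)
    {f f' : ℝ → ℝ} (hf : ∀ x ∈ Set.Icc a b, HasDerivWithinAt f (f' x) (Set.Icc a b) x)
    (hp : ∀ x, p x → f' x ≠ 0) {R : Polynomial ℝ} (hR : R ≠ 0)
    (H : ∀ u v, a ≤ u → u ≤ v → v ≤ b →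
      (∀ x ∈ Set.Ioo u v, p x ∧ R.eval (f x) ≠ 0) → F u v ≤ A)
    (u v : ℝ) (hu : a ≤ u) (huv : u ≤ v) (hv : v ≤ b) (h : ∀ x ∈ Set.Ioo u v, p x) :
    F u v ≤ 2 ^ R.natDegree * A := by
  refine le_two_pow_mul_of_splitting hA hF (fun u v => ∀ x ∈ Set.Ioo u v, p x)
    (fun _ _ _ _ h1 h2 h x hx => h x ⟨h1.trans_lt hx.1, hx.2.trans_le h2⟩) R.natDegree
    (fun j x => (Polynomial.derivative^[j] R).eval (f x)) ?_ ?_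
    (fun u v hu huv hv h1 h2 => H u v hu huv hv fun x hx => ⟨h1 x hx, h2 x hx⟩) u v hu huv hv h
  · intro j _ u v hu _ hv hpu h1
    refine injOn_Ioo_of_deriv_ne_zero
      (g' := fun x => (Polynomial.derivative^[j + 1] R).eval (f x) * f' x) ?_ hu hv
      fun x hx => mul_ne_zero (h1 x hx) (hp x (hpu x hx))
    intro x hx
    rw [Function.iterate_succ_apply']
    exact ((Polynomial.derivative^[j] R).hasDerivAt (f x)).comp_hasDerivWithinAt x (hf x hx)
  · intro _ _ _ _ _ _ x _
    rw [eval_iterate_derivative_of_natDegree_le le_rfl]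
    exact mul_ne_zero (by positivity) (Polynomial.leadingCoeff_ne_zero.2 hR)

/-- Splitting at the zeros of `g 1`, `g 2` and `g 1 ± h`. -/
lemma le_of_splitting_derivatives (hA : 0 ≤ A)
    (hF : ∀ u v w, a ≤ u → u ≤ v → v ≤ w → w ≤ b → F u w ≤ F u v + F v w)
    {N : ℕ} (hN : 1 ≤ N) (hab : a ≤ b) (hg : DerivChain g N (Set.Icc a b))
    (hgN : ∀ x ∈ Set.Icc a b, g N x ≠ 0) (h : ℝ)
    (H : ∀ u v, a ≤ u → u ≤ v → v ≤ b →
      (∀ x ∈ Set.Ioo u v, g 1 x ≠ 0 ∧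
        (2 ≤ N → g 2 x ≠ 0 ∧ g 1 x - h ≠ 0 ∧ g 1 x + h ≠ 0)) → F u v ≤ A) :
    F a b ≤ 2 ^ (4 * N) * A := by
  rcases hN.eq_or_lt with rfl | hN2
  · refine (H a b le_rfl hab le_rfl fun x hx =>
      ⟨hgN x (Set.Ioo_subset_Icc_self hx), fun h => absurd h (by norm_num)⟩).trans ?_
    exact le_mul_of_one_le_left hA (one_le_pow₀ one_le_two)
  obtain ⟨n, rfl⟩ : ∃ n, N = n + 2 := ⟨N - 2, by omega⟩
  have hconst : ∀ c : ℝ, DerivChain (fun j x => if j = 0 then g 1 x + c else g (j + 1) x) (n + 1)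
      (Set.Icc a b) := by
    intro c j hj x hx
    rcases j with _ | j
    · simpa using (hg 1 (by omega) x hx).add_const c
    · simpa using hg (j + 1 + 1) (by omega) x hx
  have s1 := le_two_pow_mul_of_derivChain (g := fun j => g (j + 1)) (n := n + 1) (p := fun _ => True)
    (A := 2 ^ n * (2 ^ (n + 1) * (2 ^ (n + 1) * A))) (by positivity) hF hg.shift hgN
  have s2 := le_two_pow_mul_of_derivChain (g := fun j => g (j + 2)) (n := n)
    (p := fun x => True ∧ g 1 x ≠ 0)
    (A := 2 ^ (n + 1) * (2 ^ (n + 1) * A)) (by positivity) hF hg.shift.shift hgN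
  have s3 := le_two_pow_mul_of_derivChain (n := n + 1)
    (p := fun x => (True ∧ g 1 x ≠ 0) ∧ g 2 x ≠ 0)
    (A := 2 ^ (n + 1) * A) (by positivity) hF (hconst (-h)) (by simpa using hgN)
  have s4 := le_two_pow_mul_of_derivChain (n := n + 1)
    (p := fun x => ((True ∧ g 1 x ≠ 0) ∧ g 2 x ≠ 0) ∧ g 1 x + -h ≠ 0)
    (A := A) (by positivity) hF (hconst h) (by simpa using hgN)
  have := s1 (s2 (s3 (s4 fun u v hu huv hv hx => H u v hu huv hv fun x hx' => by
    obtain ⟨⟨⟨⟨_, h1⟩, h2⟩, h3⟩, h4⟩ := hx x hx'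
    exact ⟨h1, fun _ => ⟨h2, by rwa [sub_eq_add_neg], h4⟩⟩))) a b le_rfl hab le_rfl
      fun _ _ => trivial
  refine this.trans ?_
  rw [← mul_assoc, ← mul_assoc, ← mul_assoc, ← pow_add, ← pow_add, ← pow_add]
  gcongr
  · exact one_le_two
  · omega

end Splitting

/-- The oscillatory integral over an interval on which all relevant functions have a constant
sign and are comparable to their thresholds in a constant way. -/
lemma exists_norm_integral_le_of_piece (N m : ℕ) (hN : 1 ≤ N) (hm : 1 ≤ m) : ∃ C : ℝ, 0 < C ∧
    ∀ (g : ℕ → ℝ → ℝ) (P : Polynomial ℝ) (u v d lam : ℝ), u ≤ v → 0 < d → d ≤ 1 →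
    |lam| * d ^ (N * (m + 1)) = 1 →
    DerivChain g (N + 2) (Set.Icc u v) → (∀ x ∈ Set.Icc u v, 1 ≤ |g N x|) →
    P.derivative.natDegree = m → (P.derivative.Monic ∨ IsSND P.derivative) →
    ((∀ x ∈ Set.Icc u v, d ^ (m * N) ≤ |P.derivative.eval (g 0 x)|) ∨
      (∀ x ∈ Set.Icc u v, |P.derivative.eval (g 0 x)| ≤ d ^ (m * N))) →
    ((∀ x ∈ Set.Icc u v, d ^ (N - 1) ≤ |g 1 x|) ∨
      (2 ≤ N ∧ ∀ x ∈ Set.Icc u v, |g 1 x| ≤ d ^ (N - 1))) →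
    ((∀ x ∈ Set.Icc u v, 0 ≤ P.derivative.derivative.eval (g 0 x) * g 1 x) ∨
      (∀ x ∈ Set.Icc u v, P.derivative.derivative.eval (g 0 x) * g 1 x ≤ 0)) →
    ((∀ x ∈ Set.Icc u v, 0 ≤ g 2 x) ∨ (∀ x ∈ Set.Icc u v, g 2 x ≤ 0)) →
    ‖∫ x in u..v, Complex.exp (Complex.I * (lam : ℂ) * ((P.eval (g 0 x) : ℝ) : ℂ))‖ ≤ C * d := by
  obtain ⟨K, hK, HK⟩ := exists_pow_sub_le N
  obtain ⟨K', hK', HK'⟩ := exists_pow_sub_le (N - 1)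
  obtain ⟨S, hS, HS⟩ := exists_pow_sub_le_of_monic_or_isSND m
  refine ⟨6 + K' + K * S, by positivity, ?_⟩
  intro g P u v d lam huv hd hd1 hlam hg hgN hdeg hP hQ h1 hs hs2
  have hKS : 0 ≤ K * S := by positivity
  have triv : ‖∫ x in u..v, Complex.exp (Complex.I * (lam : ℂ) * ((P.eval (g 0 x) : ℝ) : ℂ))‖ ≤
      v - u := by
    have := intervalIntegral.norm_integral_le_of_norm_le_const (a := u) (b := v) (C := 1)
      (f := fun x => Complex.exp (Complex.I * (lam : ℂ) * ((P.eval (g 0 x) : ℝ) : ℂ)))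
      fun x _ => by
        have e : Complex.I * (lam : ℂ) * ((P.eval (g 0 x) : ℝ) : ℂ) =
          ((lam * P.eval (g 0 x) : ℝ) : ℂ) * Complex.I := by push_cast; ring
        rw [e, Complex.norm_exp_ofReal_mul_I]
    rwa [one_mul, abs_of_nonneg (sub_nonneg.2 huv)] at this
  have hc : ∀ j < N + 2, ContinuousOn (g j) (Set.Icc u v) := fun j hj x hx =>
    (hg j hj x hx).continuousWithinAt
  have root : ∀ {L c y : ℝ} {n : ℕ}, n ≠ 0 → 1 ≤ c → 0 ≤ y → L ^ n ≤ c * y ^ n → L ≤ c * y := by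
    intro L c y n hn hc hy h
    refine le_of_pow_le_pow_left₀ hn (by positivity) (h.trans ?_)
    rw [mul_pow]
    gcongr
    exact le_self_pow₀ hc hn
  rcases h1 with h1 | ⟨hN2, h1⟩
  · rcases hQ with hQ | hQ
    · have := norm_integral_exp_le (lam := lam) (p := fun x => P.eval (g 0 x))
        (q := fun x => P.derivative.eval (g 0 x)) (r := g 1)
        (q' := fun x => P.derivative.derivative.eval (g 0 x) * g 1 x) (r' := g 2) huv
        (pow_pos hd (m * N)) (pow_pos hd (N - 1))
        (by rintro rfl; simp at hlam)
        (fun x hx => (P.hasDerivAt (g 0 x)).comp_hasDerivWithinAt x (hg 0 (by omega) x hx))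
        (fun x hx => (P.derivative.hasDerivAt (g 0 x)).comp_hasDerivWithinAt x
          (hg 0 (by omega) x hx))
        (hg 1 (by omega))
        ((P.derivative.derivative.continuous.comp_continuousOn (hc 0 (by omega))).mul
          (hc 1 (by omega)))
        (hc 2 (by omega)) hQ h1 hs hs2
      refine this.trans ?_
      have e : N * (m + 1) = m * N + (N - 1) + 1 := by
        obtain ⟨n, rfl⟩ : ∃ n, N = n + 1 := ⟨N - 1, by omega⟩
        simp; ring
      rw [e, pow_succ, pow_add] at hlam
      have hl : |lam| * d ^ (m * N) * d ^ (N - 1) = 1 / d := by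
        rw [eq_div_iff hd.ne', ← hlam]; ring
      rw [hl]
      have : 6 / (1 / d) = 6 * d := by field_simp
      rw [this]
      gcongr
      linarith
    · have hle : d ^ (m * N) ≤ 1 := pow_le_one₀ hd.le hd1
      have hval : ∀ x ∈ Set.Icc u v, ∀ y ∈ Set.Icc u v, g 0 x ≤ g 0 y →
          g 0 y - g 0 x ≤ S * d ^ N := by
        intro x hx y hy hxy
        have := HS P.derivative (g 0 x) (g 0 y) (d ^ (m * N)) hdeg hP hxy hle fun z hz => by
          obtain ⟨w, hw, rfl⟩ := isPreconnected_Icc.intermediate_value hx hy (hc 0 (by omega)) hz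
          exact hQ w hw
        rw [mul_comm m N, pow_mul] at this
        exact root (by omega) hS (by positivity) this
      have hchain : DerivChain (fun j x => if j = 0 then g 0 x - g 0 u else g j x) N
          (Set.Icc u v) := by
        intro j hj x hx
        rcases j with _ | j
        · simpa using (hg 0 (by omega) x hx).sub_const (g 0 u)
        · simpa using hg (j + 1) (by omega) x hx
      have hu : u ∈ Set.Icc u v := ⟨le_rfl, huv⟩
      have := HK _ u v (S * d ^ N) huv hchain
        (fun x hx => by simpa [show N ≠ 0 by omega] using hgN x hx)
        (fun x hx => by
          simp only [if_true]
          rw [abs_le']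
          rcases le_total (g 0 x) (g 0 u) with hx' | hx'
          · have := hval x hx u hu hx'
            constructor
            · have : 0 ≤ S * d ^ N := by positivity
              linarith
            · linarith
          · have := hval u hu x hx hx'
            constructor
            · linarith
            · have : 0 ≤ S * d ^ N := by positivity
              linarith)
      rw [← mul_assoc] at this
      refine triv.trans ((root (by omega) (one_le_mul_of_one_le_of_one_le hK hS) hd.le this).trans ?_)
      gcongr
      linarith
  · have hsh : DerivChain (fun j => g (j + 1)) (N - 1) (Set.Icc u v) :=
      fun j hj => hg (j + 1) (by omega)
    have := HK' (fun j => g (j + 1)) u v (d ^ (N - 1)) huv hsh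
      (fun x hx => by simpa [Nat.sub_add_cancel hN] using hgN x hx) h1
    refine triv.trans ((root (by omega) hK' hd.le this).trans ?_)
    gcongr
    linarith

lemma le_abs_or_abs_le_of_ne_zero {h : ℝ → ℝ} {u v e : ℝ} (huv : u < v)
    (hc : ContinuousOn h (Set.Icc u v))
    (h1 : ∀ x ∈ Set.Ioo u v, h x - e ≠ 0) (h2 : ∀ x ∈ Set.Ioo u v, h x + e ≠ 0) :
    (∀ x ∈ Set.Icc u v, e ≤ |h x|) ∨ (∀ x ∈ Set.Icc u v, |h x| ≤ e) := by
  rcases nonneg_or_nonpos_of_ne_zero (h := fun x => h x - e) huv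
      (hc.sub continuousOn_const) h1 with h3 | h3
  · exact .inl fun x hx => (sub_nonneg.1 (h3 x hx)).trans (le_abs_self _)
  rcases nonneg_or_nonpos_of_ne_zero (h := fun x => h x + e) huv
      (hc.add continuousOn_const) h2 with h4 | h4
  · exact .inr fun x hx => abs_le.2 ⟨by linarith [h4 x hx], by linarith [h3 x hx]⟩
  · exact .inl fun x hx => by linarith [h4 x hx, neg_le_abs (h x)]

lemma exists_norm_integral_le (N m : ℕ) (hN : 1 ≤ N) (hm : 1 ≤ m) : ∃ C : ℝ, 0 < C ∧
    ∀ (g : ℕ → ℝ → ℝ) (P : Polynomial ℝ) (a b d lam : ℝ), a ≤ b → 0 < d → d ≤ 1 →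
    |lam| * d ^ (N * (m + 1)) = 1 →
    DerivChain g (N + 2) (Set.Icc a b) → (∀ x ∈ Set.Icc a b, 1 ≤ |g N x|) →
    (N = 1 → (∀ x ∈ Set.Icc a b, 0 ≤ g 2 x) ∨ (∀ x ∈ Set.Icc a b, g 2 x ≤ 0)) →
    P.derivative.natDegree = m → (P.derivative.Monic ∨ IsSND P.derivative) →
    ‖∫ x in a..b, Complex.exp (Complex.I * (lam : ℂ) * ((P.eval (g 0 x) : ℝ) : ℂ))‖ ≤ C * d := by
  obtain ⟨C, hC, H⟩ := exists_norm_integral_le_of_piece N m hN hm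
  refine ⟨2 ^ (4 * N) * (2 ^ m * (2 ^ m * (2 ^ (m - 1) * C))), by positivity, ?_⟩
  intro g P a b d lam hab hd hd1 hlam hg hgN hmono hdeg hP
  set Q := P.derivative with hQ
  set E : ℝ → ℂ := fun x => Complex.exp (Complex.I * (lam : ℂ) * ((P.eval (g 0 x) : ℝ) : ℂ)) with hE
  have hc : ∀ j < N + 2, ContinuousOn (g j) (Set.Icc a b) := fun j hj x hx =>
    (hg j hj x hx).continuousWithinAt
  have hcE : ContinuousOn E (Set.Icc a b) :=
    Complex.continuous_exp.comp_continuousOn (continuousOn_const.mul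
      (Complex.continuous_ofReal.comp_continuousOn
        (P.continuous.comp_continuousOn (hc 0 (by omega)))))
  set F : ℝ → ℝ → ℝ := fun u v => ‖∫ x in u..v, E x‖ with hFdef
  have hF : ∀ u v w, a ≤ u → u ≤ v → v ≤ w → w ≤ b → F u w ≤ F u v + F v w := by
    intro u v w hu huv hvw hw
    have i1 : IntervalIntegrable E volume u v :=
      (hcE.mono (Set.Icc_subset_Icc hu (hvw.trans hw))).intervalIntegrable_of_Icc huv
    have i2 : IntervalIntegrable E volume v w :=
      (hcE.mono (Set.Icc_subset_Icc (hu.trans huv) hw)).intervalIntegrable_of_Icc hvw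
    simp only [hFdef]
    rw [← intervalIntegral.integral_add_adjacent_intervals i1 i2]
    exact norm_add_le _ _
  have hgN0 : ∀ x ∈ Set.Icc a b, g N x ≠ 0 := fun x hx h0 => by
    have := hgN x hx
    rw [h0, abs_zero] at this
    linarith
  have hd0 : ∀ c : ℝ, (Q - Polynomial.C c).natDegree = m := fun c => by
    rw [Polynomial.natDegree_sub_C, hdeg]
  have hn0 : ∀ c : ℝ, Q - Polynomial.C c ≠ 0 := fun c h0 => by
    have := hd0 c
    rw [h0, Polynomial.natDegree_zero] at this
    omega
  have hQd : Q.derivative.natDegree = m - 1 := by rw [Polynomial.natDegree_derivative, hdeg]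
  have hQ0 : Q.derivative ≠ 0 := fun h0 => by
    have := Polynomial.derivative_eq_zero.1 h0
    omega
  have hf := hg 0 (by omega)
  have base : ∀ u v, a ≤ u → u ≤ v → v ≤ b → (∀ x ∈ Set.Ioo u v,
      ((((g 1 x ≠ 0 ∧ (2 ≤ N → g 2 x ≠ 0 ∧ g 1 x - d ^ (N - 1) ≠ 0 ∧ g 1 x + d ^ (N - 1) ≠ 0)) ∧
        (Q - Polynomial.C (d ^ (m * N))).eval (g 0 x) ≠ 0) ∧
        (Q - Polynomial.C (-d ^ (m * N))).eval (g 0 x) ≠ 0) ∧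
        Q.derivative.eval (g 0 x) ≠ 0)) → F u v ≤ C * d := by
    intro u v hu huv hv h
    rcases huv.eq_or_lt with rfl | huv
    · simp only [hFdef, intervalIntegral.integral_same, norm_zero]
      positivity
    have hsub : Set.Icc u v ⊆ Set.Icc a b := Set.Icc_subset_Icc hu hv
    have hc' : ∀ j < N + 2, ContinuousOn (g j) (Set.Icc u v) := fun j hj => (hc j hj).mono hsub
    refine H g P u v d lam huv.le hd hd1 hlam (hg.mono hsub) (fun x hx => hgN x (hsub hx)) hdeg hP
      ?_ ?_ ?_ ?_
    · refine le_abs_or_abs_le_of_ne_zero huv (Q.continuous.comp_continuousOn (hc' 0 (by omega)))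
        (fun x hx => ?_) (fun x hx => ?_)
      · simpa using (h x hx).1.1.2
      · simpa using (h x hx).1.2
    · rcases hN.eq_or_lt with rfl | hN2
      · exact .inl fun x hx => by simpa using hgN x (hsub hx)
      · exact (le_abs_or_abs_le_of_ne_zero huv (hc' 1 (by omega))
          (fun x hx => ((h x hx).1.1.1.2 hN2).2.1)
          (fun x hx => ((h x hx).1.1.1.2 hN2).2.2)).imp_right fun h => ⟨hN2, h⟩
    · exact nonneg_or_nonpos_of_ne_zero huv
        ((Q.derivative.continuous.comp_continuousOn (hc' 0 (by omega))).mul (hc' 1 (by omega)))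
        fun x hx => mul_ne_zero (h x hx).2 (h x hx).1.1.1.1
    · rcases hN.eq_or_lt with rfl | hN2
      · exact (hmono rfl).imp (fun h x hx => h x (hsub hx)) (fun h x hx => h x (hsub hx))
      · exact nonneg_or_nonpos_of_ne_zero huv (hc' 2 (by omega))
          fun x hx => ((h x hx).1.1.1.2 hN2).1
  have s3 := le_two_pow_mul_of_polynomial (by positivity) hF hf (fun x hx => hx.1.1.1) hQ0 base
  rw [hQd] at s3
  have s2 := le_two_pow_mul_of_polynomial (by positivity) hF hf (fun x hx => hx.1.1) (hn0 _) s3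
  rw [hd0] at s2
  have s1 := le_two_pow_mul_of_polynomial (by positivity) hF hf (fun x hx => hx.1) (hn0 _) s2
  rw [hd0] at s1
  have s0 := le_of_splitting_derivatives (by positivity) hF hN hab
    (fun j hj => hg j (by omega)) hgN0 _ s1
  refine s0.trans (le_of_eq ?_)
  ring

lemma derivChain_iteratedDerivWithin {f : ℝ → ℝ} {a b : ℝ} (hab : a < b)
    (hf : ContDiffOn ℝ (⊤ : ℕ∞) f (Set.Icc a b)) (M : ℕ) :
    DerivChain (fun j => iteratedDerivWithin j f (Set.Icc a b)) M (Set.Icc a b) := by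
  intro j _ x hx
  have hd := hf.differentiableOn_iteratedDerivWithin (m := j)
    (by exact_mod_cast WithTop.coe_lt_top j) (uniqueDiffOn_Icc hab)
  simp only [iteratedDerivWithin_succ]
  exact (hd x hx).hasDerivWithinAt

/-- Let `N ≥ 1` and `f` smooth on `I = [a, b]` with `|f^{(N)}| ≥ 1` on
`I`, and if `N = 1` assume in addition that `f'` is monotone on `I`. Then there is a
constant `C = C(d, N)` such that for every polynomial `P` of degree `d ≥ 2` with `P'`
monic or SND, and all `|λ| ≥ 1`, `|∫_I e^{iλ P(f)}| ≤ C |λ|^{-1/(N d)}`. -/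
theorem stmt_4 (N d : ℕ) (hN : 1 ≤ N) (hd : 2 ≤ d) :
    ∃ C : ℝ, 0 < C ∧
      ∀ (a b : ℝ), a ≤ b →
      ∀ f : ℝ → ℝ, ContDiffOn ℝ (⊤ : ℕ∞) f (Set.Icc a b) →
      (∀ x ∈ Set.Icc a b, 1 ≤ |iteratedDerivWithin N f (Set.Icc a b) x|) →
      (N = 1 →
        MonotoneOn (derivWithin f (Set.Icc a b)) (Set.Icc a b) ∨
        AntitoneOn (derivWithin f (Set.Icc a b)) (Set.Icc a b)) →
      ∀ P : Polynomial ℝ, P.natDegree = d →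
        (P.derivative.Monic ∨ IsSND P.derivative) →
      ∀ lam : ℝ, 1 ≤ |lam| →
        ‖∫ x in Set.Icc a b, Complex.exp (Complex.I * (lam : ℂ) * ((P.eval (f x) : ℝ) : ℂ))‖ ≤
          C * |lam| ^ (-(1 / ((N : ℝ) * (d : ℝ)))) := by
  obtain ⟨C, hC, H⟩ := exists_norm_integral_le N (d - 1) hN (by omega)
  refine ⟨C, hC, fun a b hab f hf hfN hmono P hP hP' lam hlam => ?_⟩
  rw [integral_Icc_eq_integral_Ioc, ← intervalIntegral.integral_of_le hab]
  have hl : 0 < |lam| := by linarith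
  rcases hab.eq_or_lt with rfl | hab
  · rw [intervalIntegral.integral_same, norm_zero]
    positivity
  have hNd : (0 : ℝ) < N * d := by
    have h1 : 0 < N := by omega
    have h2 : 0 < d := by omega
    positivity
  have hchain := derivChain_iteratedDerivWithin hab hf (N + 2)
  have := H (fun j => iteratedDerivWithin j f (Set.Icc a b)) P a b
    (|lam| ^ (-(1 / ((N : ℝ) * (d : ℝ))))) lam hab.le (by positivity)
    (Real.rpow_le_one_of_one_le_of_nonpos hlam (by rw [neg_nonpos]; positivity))
    (by
      rw [Nat.sub_add_cancel (by omega), ← Real.rpow_natCast, ← Real.rpow_mul hl.le]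
      push_cast
      rw [neg_mul, one_div, inv_mul_cancel₀ hNd.ne', Real.rpow_neg_one, mul_inv_cancel₀ hl.ne'])
    hchain hfN
    (fun h1 => by
      have e1 : iteratedDerivWithin 1 f (Set.Icc a b) = derivWithin f (Set.Icc a b) := by
        rw [iteratedDerivWithin_succ, iteratedDerivWithin_zero]
      have e2 : iteratedDerivWithin 2 f (Set.Icc a b) =
          derivWithin (derivWithin f (Set.Icc a b)) (Set.Icc a b) := by
        rw [← e1, ← iteratedDerivWithin_succ]
      simp only [e2]
      exact (hmono h1).imp (fun h x _ => h.derivWithin_nonneg) (fun h x _ => h.derivWithin_nonpos))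
    (by rw [Polynomial.natDegree_derivative, hP]) hP'
  have e0 : iteratedDerivWithin 0 f (Set.Icc a b) = f := iteratedDerivWithin_zero
  simpa only [e0] using this
end
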